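/- arXiv:math/9903186 — 2 statements merged into one kernel-verified Lean document; each statement's English description precedes it below -/
import Mathlib

section
/- Assume the setting of Hypothesis 3.1: H₀ self-adjoint in H, J = J* ∈ B(H) with J² = I_H, K ∈ B₂(H); decompose H = H₊ ⊕ H₋ according to the spectral decomposition of J, with J₊, J₋ the orthogonal projections onto H₊, H₋ (so J = J₊ − J₋); set V₊ = K J₊ K*, H₊ᵒᵖ = H₀ + V₊ (dom = dom H₀), V = KJK*, H = H₀ + V (dom = dom H₀), Φ₊(z) = I₊ + J₊K*(H₀ − z)⁻¹K restricted to H₊, and Φ̃₋(z) = I₋ − J₋K*(H₊ᵒᵖ − z)⁻¹K restricted to H₋. Then for z ∈ ℂ∖ℝ: (H₀ − z)⁻¹ − (H₊ᵒᵖ − z)⁻¹ and (H₊ᵒᵖ − z)⁻¹ − (H − z)⁻¹ are trace class, tr_H((H₀ − z)⁻¹ − (H₊ᵒᵖ − z)⁻¹) = (d/dz) tr_{H₊}(log(Φ₊(z))), and tr_H((H₊ᵒᵖ − z)⁻¹ − (H − z)⁻¹) = (d/dz) tr_{H₋}(log(Φ̃₋(z))). -/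
open Complex Filter MeasureTheory TopologicalSpace ContinuousLinearMap
open scoped InnerProductSpace Topology

noncomputable section

namespace SpectralShift

variable {H : Type*} [NormedAddCommGroup H] [InnerProductSpace ℂ H] [CompleteSpace H]

/-- The imaginary part `(T - T*)/(2i)` of a bounded operator. -/
def imPart (T : H →L[ℂ] H) : H →L[ℂ] H :=
  ((2 * Complex.I)⁻¹ : ℂ) • (T - ContinuousLinearMap.adjoint T)

/-- An operator-valued Herglotz function: analytic on the open upper half-plane with
nonnegative imaginary part there. -/
def IsHerglotz (M : ℂ → H →L[ℂ] H) : Prop :=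
  DifferentiableOn ℂ M {z : ℂ | 0 < z.im} ∧ ∀ z : ℂ, 0 < z.im → (imPart (M z)).IsPositive

/-- The integrand `(T + iλ)⁻¹ - (1 + iλ)⁻¹ I` in the integral representation of `log T`. -/
def logIntegrand (T : H →L[ℂ] H) (t : ℝ) : H →L[ℂ] H :=
  Ring.inverse (T + ((t : ℂ) * Complex.I) • (1 : H →L[ℂ] H)) -
    (((1 : ℂ) + (t : ℂ) * Complex.I)⁻¹) • (1 : H →L[ℂ] H)

/-- `log T = -i ∫₀^∞ ((T + iλ)⁻¹ - (1 + iλ)⁻¹ I) dλ` as a norm-convergent improper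
Riemann integral, for a dissipative boundedly invertible `T`. -/
def opLog (T : H →L[ℂ] H) : H →L[ℂ] H :=
  limUnder atTop (fun R : ℝ => (-Complex.I) • ∫ t in (0:ℝ)..R, logIntegrand T t)

/-- The logarithm `log S = (log S*)*` of an operator `S` with `-S` dissipative. -/
def opLogAnti (T : H →L[ℂ] H) : H →L[ℂ] H :=
  ContinuousLinearMap.adjoint (opLog (ContinuousLinearMap.adjoint T))

/-- The logarithm of a Herglotz-type operator family on `ℂ ∖ ℝ`, using `log T` in the
upper half-plane and the convention `log S = (log S*)*` in the lower half-plane. -/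
def logHerg (Φ : ℂ → H →L[ℂ] H) (z : ℂ) : H →L[ℂ] H :=
  if 0 < z.im then opLog (Φ z) else opLogAnti (Φ z)

/-- The logarithm of an anti-Herglotz-type operator family on `ℂ ∖ ℝ` (nonpositive
imaginary part in the upper half-plane). -/
def logAntiHerg (Φ : ℂ → H →L[ℂ] H) (z : ℂ) : H →L[ℂ] H :=
  if 0 < z.im then opLogAnti (Φ z) else opLog (Φ z)

/-- Trace class: absolute summability of the diagonal in every Hilbert basis. -/
def IsTraceClass (T : H →L[ℂ] H) : Prop :=
  ∀ (w : Set H) (b : HilbertBasis w ℂ H), Summable fun i => ‖⟪(b i : H), T (b i)⟫_ℂ‖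

/-- The trace, computed in a fixed Hilbert basis (basis-independent for trace
class operators). -/
def trH (T : H →L[ℂ] H) : ℂ :=
  ∑' i, ⟪((exists_hilbertBasis ℂ H).choose_spec.choose i : H),
    T ((exists_hilbertBasis ℂ H).choose_spec.choose i)⟫_ℂ

/-- The trace norm, via duality with bounded operators (the correct value for trace
class operators). -/
def traceNorm (T : H →L[ℂ] H) : ℝ :=
  ⨆ B : {B : H →L[ℂ] H // ‖B‖ ≤ 1}, ‖trH (T * (B : H →L[ℂ] H))‖

/-- Hilbert-Schmidt operators. -/
def IsHilbertSchmidt (K : H →L[ℂ] H) : Prop :=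
  ∀ (w : Set H) (b : HilbertBasis w ℂ H), Summable fun i => ‖K (b i)‖ ^ 2

/-- A (possibly unbounded) self-adjoint operator in `H`: a densely defined symmetric
operator possessing everywhere-defined bounded resolvents at every non-real point. -/
structure SelfAdjointOp (H : Type*) [NormedAddCommGroup H] [InnerProductSpace ℂ H]
    [CompleteSpace H] where
  dom : Submodule ℂ H
  dense_dom : Dense (dom : Set H)
  op : dom →ₗ[ℂ] H
  symmetric : ∀ x y : dom, ⟪op x, (y : H)⟫_ℂ = ⟪(x : H), op y⟫_ℂ
  resolvent : ℂ → H →L[ℂ] H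
  resolvent_mem : ∀ {z : ℂ}, z.im ≠ 0 → ∀ x : H, resolvent z x ∈ dom
  op_resolvent : ∀ {z : ℂ} (hz : z.im ≠ 0) (x : H),
    op ⟨resolvent z x, resolvent_mem hz x⟩ - z • resolvent z x = x
  resolvent_op : ∀ {z : ℂ} (hz : z.im ≠ 0) (x : dom),
    resolvent z (op x - z • (x : H)) = x

/-- `B = A + V` for a bounded operator `V` (with `dom B = dom A`). -/
def IsSumOf (B A : SelfAdjointOp H) (V : H →L[ℂ] H) : Prop :=
  B.dom = A.dom ∧ ∀ (x : H) (hxB : x ∈ B.dom) (hxA : x ∈ A.dom),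
    B.op ⟨x, hxB⟩ = A.op ⟨x, hxA⟩ + V x

/-- `R` is the (bounded, everywhere defined) resolvent `(A - z)⁻¹` of `A` at `z`. -/
def SelfAdjointOp.IsResolventAt (A : SelfAdjointOp H) (z : ℂ) (R : H →L[ℂ] H) : Prop :=
  (∀ x : H, R x ∈ A.dom) ∧
  (∀ (x : H) (hx : R x ∈ A.dom), A.op ⟨R x, hx⟩ - z • R x = x) ∧
  (∀ x : A.dom, R (A.op x - z • (x : H)) = x)

/-- `E` is the projection-valued spectral measure of the self-adjoint operator `A`. -/
def IsSpectralMeasure (A : SelfAdjointOp H) (E : Set ℝ → H →L[ℂ] H) : Prop :=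
  (∀ B : Set ℝ, MeasurableSet B → IsSelfAdjoint (E B)) ∧
  (∀ B C : Set ℝ, MeasurableSet B → MeasurableSet C → E B * E C = E (B ∩ C)) ∧
  (E Set.univ = 1) ∧
  (∀ (f : ℕ → Set ℝ), (∀ n, MeasurableSet (f n)) → Pairwise (Function.onFun Disjoint f) →
    ∀ x : H, HasSum (fun n => E (f n) x) (E (⋃ n, f n) x)) ∧
  ∃ μ : H → Measure ℝ,
    (∀ (f : H) (B : Set ℝ), MeasurableSet B → μ f B = ENNReal.ofReal (⟪f, E B f⟫_ℂ).re) ∧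
    ∀ (z : ℂ), z.im ≠ 0 → ∀ f : H,
      ⟪f, A.resolvent z f⟫_ℂ = ∫ l : ℝ, ((l : ℂ) - z)⁻¹ ∂(μ f)

/-- Invertibility of `T` restricted to the range of the orthogonal projection `P`
(for `T` commuting with `P`), with inverse `S` supported in `ran P`. -/
def InvertibleOn (T P : H →L[ℂ] H) : Prop :=
  ∃ S : H →L[ℂ] H, S * P = S ∧ P * S = S ∧ S * (T * P) = P ∧ (P * T) * S = P

/-- The spectral projection `J₊ = (I + J)/2` onto `H₊` for a self-adjoint unitary `J`. -/
def Jplus (J : H →L[ℂ] H) : H →L[ℂ] H := ((2 : ℂ)⁻¹) • (1 + J)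

/-- The spectral projection `J₋ = (I - J)/2` onto `H₋` for a self-adjoint unitary `J`. -/
def Jminus (J : H →L[ℂ] H) : H →L[ℂ] H := ((2 : ℂ)⁻¹) • (1 - J)

/-- `Φ₊(z) = I + J₊ K* (H₀ - z)⁻¹ K J₊`, the operator on `H` inducing `Φ₊(z)` on `H₊`
(and the identity on `H₋`). -/
def PhiPlus (H0 : SelfAdjointOp H) (J K : H →L[ℂ] H) (z : ℂ) : H →L[ℂ] H :=
  1 + Jplus J * (ContinuousLinearMap.adjoint K * H0.resolvent z * K) * Jplus J

/-- `Φ̃₋(z) = I - J₋ K* (H₊ - z)⁻¹ K J₋`, the operator on `H` inducing `Φ̃₋(z)` on `H₋`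
(and the identity on `H₊`). -/
def PhiMinusT (Hp : SelfAdjointOp H) (J K : H →L[ℂ] H) (z : ℂ) : H →L[ℂ] H :=
  1 - Jminus J * (ContinuousLinearMap.adjoint K * Hp.resolvent z * K) * Jminus J

set_option linter.unusedSectionVars false

lemma hb_norm_sq {ι : Type*} (b : HilbertBasis ι ℂ H) (x : H) :
    HasSum (fun i => ‖⟪(b i : H), x⟫_ℂ‖ ^ 2) (‖x‖ ^ 2) := by
  have h := b.hasSum_inner_mul_inner x x
  have h2 : HasSum (fun i => ((‖⟪(b i : H), x⟫_ℂ‖ ^ 2 : ℝ) : ℂ)) ((‖x‖ ^ 2 : ℝ) : ℂ) := by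
    have e1 : (fun i => ((‖⟪(b i : H), x⟫_ℂ‖ ^ 2 : ℝ) : ℂ)) =
        fun i => ⟪x, (b i : H)⟫_ℂ * ⟪(b i : H), x⟫_ℂ := by
      funext i
      rw [← inner_conj_symm x (b i), Complex.conj_mul']
      push_cast; rfl
    have e2 : ((‖x‖ ^ 2 : ℝ) : ℂ) = ⟪x, x⟫_ℂ := by
      rw [inner_self_eq_norm_sq_to_K]; push_cast; rfl
    rw [e1, e2]
    exact h
  exact_mod_cast h2

lemma hb_enorm_sq {ι : Type*} (b : HilbertBasis ι ℂ H) (x : H) :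
    ∑' i, ENNReal.ofReal (‖⟪(b i : H), x⟫_ℂ‖ ^ 2) = ENNReal.ofReal (‖x‖ ^ 2) := by
  rw [← ENNReal.ofReal_tsum_of_nonneg (fun i => by positivity) (hb_norm_sq b x).summable,
    (hb_norm_sq b x).tsum_eq]

lemma hs_swap {ι κ : Type*} (b : HilbertBasis ι ℂ H) (c : HilbertBasis κ ℂ H)
    (T : H →L[ℂ] H) :
    ∑' i, ENNReal.ofReal (‖T (b i)‖ ^ 2) =
      ∑' j, ENNReal.ofReal (‖ContinuousLinearMap.adjoint T (c j)‖ ^ 2) := by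
  simp_rw [← hb_enorm_sq c (T _), ← hb_enorm_sq b (ContinuousLinearMap.adjoint T _)]
  rw [ENNReal.tsum_comm]
  congr 1; funext j; congr 1; funext i
  rw [ContinuousLinearMap.adjoint_inner_right, norm_inner_symm]

lemma summable_iff_ofReal {ι : Type*} (f : ι → ℝ) (hf : ∀ i, 0 ≤ f i) :
    Summable f ↔ ∑' i, ENNReal.ofReal (f i) ≠ ⊤ := by
  refine ⟨fun h => h.tsum_ofReal_ne_top, fun h => ?_⟩
  have := ENNReal.summable_toReal h
  simpa [ENNReal.toReal_ofReal (hf _)] using this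

/-- the fixed basis -/
def theBasis (H : Type*) [NormedAddCommGroup H] [InnerProductSpace ℂ H] [CompleteSpace H] :
    HilbertBasis (exists_hilbertBasis ℂ H).choose ℂ H :=
  (exists_hilbertBasis ℂ H).choose_spec.choose

lemma trH_def (T : H →L[ℂ] H) : trH T = ∑' i, ⟪(theBasis H i : H), T (theBasis H i)⟫_ℂ := rfl

lemma IsHilbertSchmidt.adj {T : H →L[ℂ] H} (h : IsHilbertSchmidt T) :
    IsHilbertSchmidt (ContinuousLinearMap.adjoint T) := by
  intro w b
  rw [summable_iff_ofReal _ (fun i => by positivity), ← hs_swap b b,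
    ← summable_iff_ofReal _ (fun i => by positivity)]
  exact h w b

lemma IsHilbertSchmidt.mul_left {T : H →L[ℂ] H} (h : IsHilbertSchmidt T) (X : H →L[ℂ] H) :
    IsHilbertSchmidt (X * T) := by
  intro w b
  refine Summable.of_nonneg_of_le (fun i => by positivity) (fun i => ?_)
    ((h w b).mul_left (‖X‖ ^ 2))
  rw [← mul_pow]
  gcongr
  exact X.le_opNorm _

lemma adj_mul (X Y : H →L[ℂ] H) : ContinuousLinearMap.adjoint (X * Y) =
    ContinuousLinearMap.adjoint Y * ContinuousLinearMap.adjoint X :=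
  ContinuousLinearMap.adjoint_comp X Y

lemma IsHilbertSchmidt.mul_right {T : H →L[ℂ] H} (h : IsHilbertSchmidt T) (X : H →L[ℂ] H) :
    IsHilbertSchmidt (T * X) := by
  have := (h.adj.mul_left (ContinuousLinearMap.adjoint X)).adj
  rwa [← adj_mul, ContinuousLinearMap.adjoint_adjoint] at this

lemma IsHilbertSchmidt.traceClass {X Y : H →L[ℂ] H} (hX : IsHilbertSchmidt X)
    (hY : IsHilbertSchmidt Y) : IsTraceClass (X * Y) := by
  intro w b
  refine Summable.of_nonneg_of_le (fun i => by positivity) (fun i => ?_)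
    ((hX.adj w b).add (hY w b))
  rw [mul_apply_eq_comp, ← ContinuousLinearMap.adjoint_inner_left]
  refine (norm_inner_le_norm _ _).trans ?_
  nlinarith [sq_nonneg (‖ContinuousLinearMap.adjoint X (b i)‖ - ‖Y (b i)‖),
    sq_nonneg (‖ContinuousLinearMap.adjoint X (b i)‖), sq_nonneg (‖Y (b i)‖)]

lemma IsTraceClass.hasSum {T : H →L[ℂ] H} (h : IsTraceClass T) :
    HasSum (fun i => ⟪(theBasis H i : H), T (theBasis H i)⟫_ℂ) (trH T) :=
  (Summable.of_norm (h _ (theBasis H))).hasSum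

lemma IsTraceClass.add {S T : H →L[ℂ] H} (hS : IsTraceClass S) (hT : IsTraceClass T) :
    IsTraceClass (S + T) := by
  intro w b
  refine Summable.of_nonneg_of_le (fun i => by positivity) (fun i => ?_) ((hS w b).add (hT w b))
  rw [add_apply, inner_add_right]
  exact norm_add_le _ _

lemma IsTraceClass.smul {T : H →L[ℂ] H} (hT : IsTraceClass T) (c : ℂ) :
    IsTraceClass (c • T) := by
  intro w b
  refine ((hT w b).mul_left ‖c‖).congr (fun i => ?_)
  rw [smul_apply, inner_smul_right, norm_mul]

lemma trH_add {S T : H →L[ℂ] H} (hS : IsTraceClass S) (hT : IsTraceClass T) :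
    trH (S + T) = trH S + trH T := by
  refine HasSum.unique ((hS.add hT).hasSum) ?_
  simpa [inner_add_right] using hS.hasSum.add hT.hasSum

lemma trH_smul (T : H →L[ℂ] H) (c : ℂ) : trH (c • T) = c * trH T := by
  simp [trH_def, inner_smul_right, tsum_mul_left]

lemma trH_adj (T : H →L[ℂ] H) :
    trH (ContinuousLinearMap.adjoint T) = (starRingEnd ℂ) (trH T) := by
  rw [trH_def, trH_def, Complex.conj_tsum]
  congr 1; funext i
  rw [ContinuousLinearMap.adjoint_inner_right, inner_conj_symm]

lemma hs_double {T : H →L[ℂ] H} (h : IsHilbertSchmidt T) :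
    Summable (fun p : (exists_hilbertBasis ℂ H).choose × (exists_hilbertBasis ℂ H).choose =>
      ‖⟪(theBasis H p.2 : H), T (theBasis H p.1)⟫_ℂ‖ ^ 2) := by
  rw [summable_prod_of_nonneg (fun p => by positivity)]
  refine ⟨fun i => (hb_norm_sq (theBasis H) (T (theBasis H i))).summable, ?_⟩
  have e : (fun i => ∑' j, ‖⟪(theBasis H j : H), T (theBasis H i)⟫_ℂ‖ ^ 2) =
      fun i => ‖T (theBasis H i)‖ ^ 2 := by
    funext i
    exact (hb_norm_sq (theBasis H) (T (theBasis H i))).tsum_eq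
  have h2 := h _ (theBasis H)
  rw [← e] at h2
  exact h2

lemma trH_comm {X Y : H →L[ℂ] H} (hX : IsHilbertSchmidt X)
    (hY : IsHilbertSchmidt Y) : trH (X * Y) = trH (Y * X) := by
  have key : ∀ {X Y : H →L[ℂ] H}, trH (X * Y) =
      ∑' i, ∑' j, ⟪(theBasis H i : H), X (theBasis H j)⟫_ℂ *
        ⟪(theBasis H j : H), Y (theBasis H i)⟫_ℂ := by
    intro X Y
    rw [trH_def]
    congr 1; funext i
    rw [mul_apply_eq_comp, ← ContinuousLinearMap.adjoint_inner_left,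
      ← (theBasis H).tsum_inner_mul_inner]
    congr 1; funext j
    rw [ContinuousLinearMap.adjoint_inner_left]
  rw [key, key, Summable.tsum_comm]
  · congr 1; funext i; congr 1; funext j; rw [mul_comm]
  · refine Summable.of_norm (Summable.of_nonneg_of_le (fun i => by positivity) (fun p => ?_)
      ((hs_double hX).add (hs_double hY).prod_symm))
    simp only [Function.uncurry, norm_mul, Prod.fst_swap, Prod.snd_swap]
    nlinarith [sq_nonneg (‖⟪(theBasis H p.2 : H), X (theBasis H p.1)⟫_ℂ‖ -
      ‖⟪(theBasis H p.1 : H), Y (theBasis H p.2)⟫_ℂ‖),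
      sq_nonneg (‖⟪(theBasis H p.2 : H), X (theBasis H p.1)⟫_ℂ‖),
      sq_nonneg (‖⟪(theBasis H p.1 : H), Y (theBasis H p.2)⟫_ℂ‖)]

/-- squared HS norm -/
def hsR (T : H →L[ℂ] H) : ℝ := ∑' i, ‖T (theBasis H i)‖ ^ 2

lemma hsR_nonneg (T : H →L[ℂ] H) : 0 ≤ hsR T := tsum_nonneg fun i => by positivity

lemma hsR_adj {T : H →L[ℂ] H} (h : IsHilbertSchmidt T) :
    hsR (ContinuousLinearMap.adjoint T) = hsR T := by
  have h1 := hs_swap (theBasis H) (theBasis H) T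
  rw [← ENNReal.ofReal_tsum_of_nonneg (fun i => by positivity) (h _ _),
    ← ENNReal.ofReal_tsum_of_nonneg (fun i => by positivity) (h.adj _ _)] at h1
  exact ((ENNReal.ofReal_eq_ofReal_iff (hsR_nonneg _) (hsR_nonneg _)).1 h1).symm

lemma hsR_mul_le {T : H →L[ℂ] H} (h : IsHilbertSchmidt T) (X : H →L[ℂ] H) :
    hsR (X * T) ≤ ‖X‖ ^ 2 * hsR T := by
  rw [hsR, hsR, ← tsum_mul_left]
  refine Summable.tsum_le_tsum (fun i => ?_) ((h.mul_left X) _ _) ((h _ _).mul_left _)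
  rw [← mul_pow]
  gcongr
  exact X.le_opNorm _

lemma norm_trH_le {X Y : H →L[ℂ] H} (hX : IsHilbertSchmidt X)
    (hY : IsHilbertSchmidt Y) : ‖trH (X * Y)‖ ≤ √(hsR X) * √(hsR Y) := by
  have h := Real.summable_and_inner_le_Lp_mul_Lq_tsum_of_nonneg (p := 2) (q := 2)
    (f := fun i => ‖ContinuousLinearMap.adjoint X (theBasis H i)‖)
    (g := fun i => ‖Y (theBasis H i)‖)
    Real.HolderConjugate.two_two (fun i => norm_nonneg _) (fun i => norm_nonneg _)
    (by simpa using hX.adj _ (theBasis H)) (by simpa using hY _ (theBasis H))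
  rw [← hsR_adj hX, Real.sqrt_eq_rpow, Real.sqrt_eq_rpow]
  have h2 := h.2
  simp only [Real.rpow_two] at h2
  refine le_trans ?_ h2
  refine tsum_of_norm_bounded h.1.hasSum fun i => ?_
  rw [mul_apply_eq_comp, ← ContinuousLinearMap.adjoint_inner_left]
  exact norm_inner_le_norm _ _

/-- the bilinear form `tr (X B* Y B)` -/
def betaForm (B : H →L[ℂ] H) (hB : IsHilbertSchmidt B) :
    (H →L[ℂ] H) →L[ℂ] (H →L[ℂ] H) →L[ℂ] ℂ :=
  LinearMap.mkContinuous₂ (LinearMap.mk₂ ℂ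
    (fun X Y => trH ((X * ContinuousLinearMap.adjoint B) * (Y * B)))
    (fun X X' Y => by
      rw [add_mul, add_mul, trH_add ((hB.adj.mul_left _).traceClass (hB.mul_left _))
        ((hB.adj.mul_left _).traceClass (hB.mul_left _))])
    (fun c X Y => by rw [smul_mul_assoc, smul_mul_assoc, trH_smul, smul_eq_mul])
    (fun X Y Y' => by
      rw [add_mul, mul_add, trH_add ((hB.adj.mul_left _).traceClass (hB.mul_left _))
        ((hB.adj.mul_left _).traceClass (hB.mul_left _))])
    (fun c X Y => by rw [smul_mul_assoc, mul_smul_comm, trH_smul, smul_eq_mul]))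
    (hsR B) (fun X Y => by
      simp only [LinearMap.mk₂_apply]
      refine (norm_trH_le (hB.adj.mul_left _) (hB.mul_left _)).trans ?_
      have h1 : √(hsR (X * ContinuousLinearMap.adjoint B)) ≤ ‖X‖ * √(hsR B) := by
        rw [← Real.sqrt_sq (norm_nonneg X), ← Real.sqrt_mul (by positivity)]
        have := hsR_mul_le hB.adj X
        rw [hsR_adj hB] at this
        exact Real.sqrt_le_sqrt this
      have h2 : √(hsR (Y * B)) ≤ ‖Y‖ * √(hsR B) := by
        rw [← Real.sqrt_sq (norm_nonneg Y), ← Real.sqrt_mul (by positivity)]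
        exact Real.sqrt_le_sqrt (hsR_mul_le hB Y)
      calc _ ≤ (‖X‖ * √(hsR B)) * (‖Y‖ * √(hsR B)) := by gcongr
        _ = (√(hsR B) * √(hsR B)) * ‖X‖ * ‖Y‖ := by ring
        _ = _ := by rw [Real.mul_self_sqrt (hsR_nonneg B)])

lemma betaForm_apply (B : H →L[ℂ] H) (hB : IsHilbertSchmidt B) (X Y : H →L[ℂ] H) :
    betaForm B hB X Y = trH ((X * ContinuousLinearMap.adjoint B) * (Y * B)) := rfl


section Resolvents
variable (A : SelfAdjointOp H)

lemma op_sub_eq {z : ℂ} (hz : z.im ≠ 0) (x : H) :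
    x = A.op ⟨A.resolvent z x, A.resolvent_mem hz x⟩ - z • A.resolvent z x :=
  (A.op_resolvent hz x).symm

lemma op_inner_im (x : A.dom) : (⟪A.op x, (x : H)⟫_ℂ).im = 0 := by
  have h := A.symmetric x x
  rw [← inner_conj_symm (x : H) (A.op x)] at h
  exact Complex.conj_eq_iff_im.1 h.symm

lemma res_inner {z : ℂ} (hz : z.im ≠ 0) (x y : H) :
    ⟪A.resolvent z x, y⟫_ℂ = ⟪x, A.resolvent ((starRingEnd ℂ) z) y⟫_ℂ := by
  have hz' : ((starRingEnd ℂ) z).im ≠ 0 := by simpa using hz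
  conv_lhs => rw [op_sub_eq A hz' y]
  conv_rhs => rw [op_sub_eq A hz x]
  rw [inner_sub_right, inner_sub_left, inner_smul_left, inner_smul_right]
  rw [A.symmetric ⟨A.resolvent z x, A.resolvent_mem hz x⟩
    ⟨A.resolvent ((starRingEnd ℂ) z) y, A.resolvent_mem hz' y⟩]

lemma res_adj {z : ℂ} (hz : z.im ≠ 0) :
    ContinuousLinearMap.adjoint (A.resolvent z) = A.resolvent ((starRingEnd ℂ) z) := by
  symm
  rw [ContinuousLinearMap.eq_adjoint_iff]
  intro x y
  have hz' : ((starRingEnd ℂ) z).im ≠ 0 := by simpa using hz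
  rw [res_inner A hz', Complex.conj_conj]

lemma res_im {z : ℂ} (hz : z.im ≠ 0) (x : H) :
    (⟪x, A.resolvent z x⟫_ℂ).im = z.im * ‖A.resolvent z x‖ ^ 2 := by
  have h : ⟪x, A.resolvent z x⟫_ℂ = ⟪A.op ⟨A.resolvent z x, A.resolvent_mem hz x⟩
      - z • A.resolvent z x, A.resolvent z x⟫_ℂ := by rw [← op_sub_eq A hz x]
  rw [h, inner_sub_left, inner_smul_left, inner_self_eq_norm_sq_to_K, Complex.sub_im]
  have := op_inner_im A ⟨A.resolvent z x, A.resolvent_mem hz x⟩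
  simp only at this
  rw [this]
  have e : (((‖A.resolvent z x‖ : ℝ) : ℂ) ^ 2) = ((‖A.resolvent z x‖ ^ 2 : ℝ) : ℂ) := by
    push_cast; rfl
  erw [e, Complex.im_mul_ofReal]
  simp

lemma res_norm {z : ℂ} (hz : z.im ≠ 0) : ‖A.resolvent z‖ ≤ |z.im|⁻¹ := by
  refine ContinuousLinearMap.opNorm_le_bound _ (by positivity) fun x => ?_
  have h := res_im A hz x
  have h1 : |z.im| * ‖A.resolvent z x‖ ^ 2 ≤ ‖x‖ * ‖A.resolvent z x‖ := by
    have h2 : |z.im| * ‖A.resolvent z x‖ ^ 2 = |(⟪x, A.resolvent z x⟫_ℂ).im| := by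
      rw [h, abs_mul, abs_of_nonneg (sq_nonneg ‖A.resolvent z x‖)]
    rw [h2]
    exact (Complex.abs_im_le_norm _).trans (norm_inner_le_norm _ _)
  have hp : 0 < |z.im| := abs_pos.2 hz
  rcases (norm_nonneg (A.resolvent z x)).eq_or_lt with h0 | h0
  · rw [← h0]; positivity
  · rw [inv_mul_eq_div, le_div_iff₀ hp]
    nlinarith

lemma res_sub {w z : ℂ} (hw : w.im ≠ 0) (hz : z.im ≠ 0) :
    A.resolvent w - A.resolvent z = (w - z) • (A.resolvent w * A.resolvent z) := by
  ext x
  have h1 := A.resolvent_op hw ⟨A.resolvent z x, A.resolvent_mem hz x⟩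
  have h2 := op_sub_eq A hz x
  set a := A.op ⟨A.resolvent z x, A.resolvent_mem hz x⟩ with ha
  have h3 : x = (a - w • A.resolvent z x) + (w - z) • A.resolvent z x := by
    conv_lhs => rw [h2]
    rw [sub_smul]; abel
  have h4 : A.resolvent w x = A.resolvent z x + (w - z) • A.resolvent w (A.resolvent z x) := by
    conv_lhs => rw [h3]
    rw [map_add, map_smul, h1]
  simp [h4]

lemma res_cont {z : ℂ} (hz : z.im ≠ 0) : ContinuousAt A.resolvent z := by
  rw [ContinuousAt, tendsto_iff_norm_sub_tendsto_zero]
  have hev : ∀ᶠ w : ℂ in 𝓝 z, |z.im| / 2 < |w.im| := by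
    have : ContinuousAt (fun w : ℂ => |w.im|) z := by fun_prop
    exact this.eventually (lt_mem_nhds (half_lt_self (abs_pos.2 hz)))
  have hp : 0 < |z.im| := abs_pos.2 hz
  refine squeeze_zero' (g := fun w => ‖w - z‖ * ((|z.im| / 2)⁻¹ * |z.im|⁻¹))
    (Eventually.of_forall fun w => norm_nonneg _) ?_ ?_
  · filter_upwards [hev] with w hw
    have hw0 : w.im ≠ 0 := by
      intro h; rw [h, abs_zero] at hw; linarith
    rw [res_sub A hw0 hz, norm_smul]
    gcongr
    refine (norm_mul_le _ _).trans ?_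
    gcongr
    · refine (res_norm A hw0).trans ?_
      gcongr
    · exact res_norm A hz
  · have : Tendsto (fun w : ℂ => ‖w - z‖ * ((|z.im| / 2)⁻¹ * |z.im|⁻¹)) (𝓝 z)
        (𝓝 (‖z - z‖ * ((|z.im| / 2)⁻¹ * |z.im|⁻¹))) := by
      apply Continuous.tendsto; fun_prop
    simpa using this

lemma res_pert {A A' : SelfAdjointOp H} {V : H →L[ℂ] H} (h : IsSumOf A' A V) {z : ℂ}
    (hz : z.im ≠ 0) :
    A.resolvent z - A'.resolvent z = A.resolvent z * V * A'.resolvent z := by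
  ext x
  have hmA : A'.resolvent z x ∈ A.dom := h.1 ▸ A'.resolvent_mem hz x
  have h1 := A.resolvent_op hz ⟨A'.resolvent z x, hmA⟩
  have h2 := op_sub_eq A' hz x
  rw [h.2 _ _ hmA] at h2
  set a := A.op ⟨A'.resolvent z x, hmA⟩ with ha
  have h3 : x = (a - z • A'.resolvent z x) + V (A'.resolvent z x) := by
    conv_lhs => rw [h2]
    abel
  have h4 : A.resolvent z x = A'.resolvent z x + A.resolvent z (V (A'.resolvent z x)) := by
    conv_lhs => rw [h3]
    rw [map_add, h1]
  simp [h4]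

lemma IsSumOf.symm' {A A' : SelfAdjointOp H} {V : H →L[ℂ] H} (h : IsSumOf A' A V) :
    IsSumOf A A' (-V) := by
  refine ⟨h.1.symm, fun x hA hA' => ?_⟩
  rw [h.2 x hA' hA]; simp

lemma res_pert' {A A' : SelfAdjointOp H} {V : H →L[ℂ] H} (h : IsSumOf A' A V) {z : ℂ}
    (hz : z.im ≠ 0) :
    A.resolvent z - A'.resolvent z = A'.resolvent z * V * A.resolvent z := by
  have := res_pert h.symm' hz
  rw [← neg_sub, this]; simp

end Resolvents

section Log

/-- `(T + it)⁻¹` -/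
def Qt (T : H →L[ℂ] H) (t : ℝ) : H →L[ℂ] H :=
  Ring.inverse (T + ((t : ℂ) * Complex.I) • (1 : H →L[ℂ] H))

/-- quantitative invertibility of `T + it` -/
def GoodT (T : H →L[ℂ] H) (C : ℝ) : Prop :=
  ∀ t : ℝ, 0 ≤ t → IsUnit (T + ((t : ℂ) * Complex.I) • (1 : H →L[ℂ] H)) ∧
    ‖Qt T t‖ ≤ C * (1 + t)⁻¹

lemma goodT_of {T S : H →L[ℂ] H} {M : ℝ} (hd : ∀ x, 0 ≤ (⟪x, T x⟫_ℂ).im)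
    (h1 : S * T = 1) (h2 : T * S = 1) (hM : ‖S‖ ≤ M) : GoodT T (1 + 2 * M) := by
  intro t ht
  have hM0 : 0 ≤ M := (norm_nonneg _).trans hM
  have him : ∀ x : H, t * ‖x‖ ^ 2 ≤ ‖⟪x, (T + ((t : ℂ) * Complex.I) • (1 : H →L[ℂ] H)) x⟫_ℂ‖ := by
    intro x
    refine le_trans ?_ ((le_abs_self _).trans (Complex.abs_im_le_norm _))
    have e : (⟪x, (T + ((t : ℂ) * Complex.I) • (1 : H →L[ℂ] H)) x⟫_ℂ).im =
        (⟪x, T x⟫_ℂ).im + t * ‖x‖ ^ 2 := by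
      rw [add_apply, inner_add_right, smul_apply, inner_smul_right, one_apply_eq_self,
        inner_self_eq_norm_sq_to_K, Complex.add_im]
      have e : (((‖x‖ : ℝ) : ℂ) ^ 2) = ((‖x‖ ^ 2 : ℝ) : ℂ) := by
        push_cast; rfl
      erw [e, Complex.im_mul_ofReal]
      simp
    rw [e]
    linarith [hd x]
  have hu : IsUnit (T + ((t : ℂ) * Complex.I) • (1 : H →L[ℂ] H)) := by
    rcases ht.eq_or_lt with h0 | h0
    · rw [← h0]
      simp only [Complex.ofReal_zero, zero_mul, zero_smul, add_zero]
      exact ⟨⟨T, S, h2, h1⟩, rfl⟩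
    · refine ContinuousLinearMap.isUnit_of_forall_le_norm_inner_map _ (c := ⟨t, ht⟩) h0 fun x => ?_
      rw [norm_inner_symm, mul_comm]
      exact him x
  refine ⟨hu, ?_⟩
  have hlow : ∀ x : H, (1 + t) * ‖x‖ ≤
      (1 + 2 * M) * ‖(T + ((t : ℂ) * Complex.I) • (1 : H →L[ℂ] H)) x‖ := by
    intro x
    set a := ‖(T + ((t : ℂ) * Complex.I) • (1 : H →L[ℂ] H)) x‖ with ha
    have ha0 : 0 ≤ a := norm_nonneg _
    have e1 : t * ‖x‖ ≤ a := by
      have := (him x).trans (norm_inner_le_norm _ _)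
      rcases (norm_nonneg x).eq_or_lt with h0 | h0
      · rw [← h0]; simpa using ha0
      · nlinarith
    have e2 : ‖T x‖ ≤ a + t * ‖x‖ := by
      have : T x = (T + ((t : ℂ) * Complex.I) • (1 : H →L[ℂ] H)) x - ((t : ℂ) * Complex.I) • x := by
        simp
      rw [this]
      refine (norm_sub_le _ _).trans ?_
      rw [norm_smul, norm_mul, Complex.norm_I, mul_one, Complex.norm_real, Real.norm_of_nonneg ht]
    have e3 : ‖x‖ ≤ M * ‖T x‖ := by
      have : x = S (T x) := by
        rw [← mul_apply_eq_comp, h1, one_apply_eq_self]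
      calc ‖x‖ = ‖S (T x)‖ := by rw [← this]
        _ ≤ ‖S‖ * ‖T x‖ := S.le_opNorm _
        _ ≤ _ := by gcongr
    have e4 : ‖x‖ ≤ M * (2 * a) := e3.trans (by gcongr; linarith)
    linarith
  refine ContinuousLinearMap.opNorm_le_bound _ (by positivity) fun y => ?_
  have h := hlow (Qt T t y)
  rw [← mul_apply_eq_comp, Qt, Ring.mul_inverse_cancel _ hu, one_apply_eq_self] at h
  have hp : 0 < 1 + t := by linarith
  rw [mul_assoc, mul_comm (1 + t)⁻¹, ← mul_assoc, ← div_eq_mul_inv, le_div_iff₀ hp, mul_comm]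
  exact h

variable {T T' : H →L[ℂ] H} {C C' : ℝ}

lemma GoodT.nonneg (h : GoodT T C) : 0 ≤ C := by
  have := (norm_nonneg _).trans (h 0 le_rfl).2
  simpa using this

lemma GoodT.hasDerivAt (h : GoodT T C) {t : ℝ} (ht : 0 ≤ t) :
    HasDerivAt (Qt T) (-(Complex.I • (Qt T t * Qt T t))) t := by
  obtain ⟨u, hu⟩ := (h t ht).1
  have h1 := hasFDerivAt_ringInverse (𝕜 := ℝ) u
  rw [hu] at h1
  have h2 : HasDerivAt (fun t : ℝ => T + ((t : ℂ) * Complex.I) • (1 : H →L[ℂ] H))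
      (((1 : ℂ) * Complex.I) • (1 : H →L[ℂ] H)) t := by
    refine HasDerivAt.const_add T ?_
    exact ((Complex.ofRealCLM.hasDerivAt (x := t)).mul_const Complex.I).smul_const _
  have h3 := h1.comp_hasDerivAt t h2
  have e : Qt T t = (↑u⁻¹ : H →L[ℂ] H) := by
    rw [Qt, ← hu, Ring.inverse_unit]
  rw [e]
  refine h3.congr_deriv ?_
  simp

lemma GoodT.cont (h : GoodT T C) : ContinuousOn (Qt T) (Set.Ici 0) := fun t ht =>
  (h.hasDerivAt ht).continuousAt.continuousWithinAt

lemma norm_inv_one_add (t : ℝ) (ht : 0 ≤ t) :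
    ‖((1 : ℂ) + (t : ℂ) * Complex.I)⁻¹‖ ≤ 2 * (1 + t)⁻¹ := by
  have h1 : (1 : ℝ) ≤ ‖(1 : ℂ) + (t : ℂ) * Complex.I‖ := by
    have := Complex.abs_re_le_norm ((1 : ℂ) + (t : ℂ) * Complex.I)
    simpa using this
  have h2 : t ≤ ‖(1 : ℂ) + (t : ℂ) * Complex.I‖ := by
    have := Complex.abs_im_le_norm ((1 : ℂ) + (t : ℂ) * Complex.I)
    simp at this
    exact (le_abs_self t).trans this
  rw [norm_inv, ← div_eq_mul_inv, inv_eq_one_div, div_le_div_iff₀ (by linarith) (by linarith)]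
  linarith

lemma one_add_ne (t : ℝ) : (1 : ℂ) + (t : ℂ) * Complex.I ≠ 0 := by
  intro h
  have := congrArg Complex.re h
  simp at this

lemma integrable_bound (C : ℝ) :
    IntegrableOn (fun t : ℝ => C * ((1 + t)⁻¹ * (1 + t)⁻¹)) (Set.Ioi 0) := by
  refine Integrable.const_mul ?_ C
  refine Integrable.mono' (integrable_inv_one_add_sq.integrableOn (s := Set.Ioi 0)) ?_ ?_
  · refine Measurable.aestronglyMeasurable ?_
    fun_prop
  · refine (ae_restrict_mem measurableSet_Ioi).mono fun t ht => ?_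
    have ht : 0 < t := ht
    rw [Real.norm_of_nonneg (by positivity), ← mul_inv]
    gcongr
    nlinarith

lemma integrableOn_of {E : Type*} [NormedAddCommGroup E] {f : ℝ → E} (C : ℝ)
    (hc : ContinuousOn f (Set.Ici 0))
    (hb : ∀ t : ℝ, 0 ≤ t → ‖f t‖ ≤ C * ((1 + t)⁻¹ * (1 + t)⁻¹)) :
    IntegrableOn f (Set.Ioi 0) := by
  refine Integrable.mono' (integrable_bound C) ?_ ?_
  · exact (hc.mono Set.Ioi_subset_Ici_self).aestronglyMeasurable measurableSet_Ioi
  · exact (ae_restrict_mem measurableSet_Ioi).mono fun t ht => hb t (le_of_lt ht)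

lemma cont_inv_one_add : Continuous fun t : ℝ => ((1 : ℂ) + (t : ℂ) * Complex.I)⁻¹ :=
  Continuous.inv₀ (by fun_prop) one_add_ne

lemma GoodT.integrable (h : GoodT T C) :
    IntegrableOn (fun t : ℝ => ((1 : ℂ) + (t : ℂ) * Complex.I)⁻¹ • Qt T t) (Set.Ioi 0) := by
  refine integrableOn_of (2 * C) (cont_inv_one_add.continuousOn.smul h.cont) fun t ht => ?_
  rw [norm_smul]
  calc _ ≤ (2 * (1 + t)⁻¹) * (C * (1 + t)⁻¹) := by
        gcongr
        · exact norm_inv_one_add t ht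
        · exact (h t ht).2
    _ = _ := by ring

lemma GoodT.logIntegrand_eq (h : GoodT T C) {t : ℝ} (ht : 0 ≤ t) :
    logIntegrand T t = -((((1 : ℂ) + (t : ℂ) * Complex.I)⁻¹ • Qt T t) * (T - 1)) := by
  have hQ : Qt T t * (T + ((t : ℂ) * Complex.I) • (1 : H →L[ℂ] H)) = 1 :=
    Ring.inverse_mul_cancel _ (h t ht).1
  have e1 : Qt T t * (T - 1) = 1 - ((1 : ℂ) + (t : ℂ) * Complex.I) • Qt T t := by
    rw [mul_add, mul_smul_comm, mul_one] at hQ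
    rw [mul_sub, mul_one, ← hQ, add_smul, one_smul]
    abel
  rw [smul_mul_assoc, e1, smul_sub, smul_smul, inv_mul_cancel₀ (one_add_ne t), one_smul, neg_sub]
  rfl

lemma GoodT.opLog_eq (h : GoodT T C) :
    opLog T = (Complex.I • ∫ t in Set.Ioi (0 : ℝ), ((1 : ℂ) + (t : ℂ) * Complex.I)⁻¹ • Qt T t)
      * (T - 1) := by
  have hi := h.integrable
  have hi2 : IntegrableOn (logIntegrand T) (Set.Ioi 0) := by
    have := (((ContinuousLinearMap.mul ℂ (H →L[ℂ] H)).flip (T - 1)).integrable_comp hi).neg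
    refine this.congr ((ae_restrict_mem measurableSet_Ioi).mono fun t ht => ?_)
    rw [h.logIntegrand_eq (le_of_lt ht)]; rfl
  have hint : ∫ t in Set.Ioi (0 : ℝ), logIntegrand T t =
      -((∫ t in Set.Ioi (0 : ℝ), ((1 : ℂ) + (t : ℂ) * Complex.I)⁻¹ • Qt T t) * (T - 1)) := by
    rw [setIntegral_congr_fun measurableSet_Ioi
      (fun t (ht : 0 < t) => h.logIntegrand_eq ht.le), integral_neg]
    congr 1
    exact ((ContinuousLinearMap.mul ℂ (H →L[ℂ] H)).flip (T - 1)).integral_comp_comm hi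
  have ht := (intervalIntegral_tendsto_integral_Ioi 0 hi2 tendsto_id).const_smul (-Complex.I)
  rw [opLog]
  erw [ht.limUnder_eq]
  rw [hint, smul_mul_assoc, neg_smul, smul_neg, neg_neg]

lemma GoodT.Q_sub (h : GoodT T C) (h' : GoodT T' C') {t : ℝ} (ht : 0 ≤ t) :
    Qt T t - Qt T' t = Qt T t * (T' - T) * Qt T' t := by
  have hQ : Qt T t * (T + ((t : ℂ) * Complex.I) • (1 : H →L[ℂ] H)) = 1 :=
    Ring.inverse_mul_cancel _ (h t ht).1
  have hQ' : (T' + ((t : ℂ) * Complex.I) • (1 : H →L[ℂ] H)) * Qt T' t = 1 :=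
    Ring.mul_inverse_cancel _ (h' t ht).1
  have e : T' - T = (T' + ((t : ℂ) * Complex.I) • (1 : H →L[ℂ] H)) -
    (T + ((t : ℂ) * Complex.I) • (1 : H →L[ℂ] H)) := by abel
  rw [e, mul_sub, hQ, sub_mul, mul_assoc, hQ', mul_one, one_mul]

end Log

section Core
variable (A A' : SelfAdjointOp H) (B : H →L[ℂ] H) (s : ℝ)

/-- `1 + s B* R(w) B` -/
def PhiG (w : ℂ) : H →L[ℂ] H :=
  1 + (s : ℂ) • (ContinuousLinearMap.adjoint B * A.resolvent w * B)

/-- the inverse `1 - s B* R'(w) B` -/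
def PsiG (w : ℂ) : H →L[ℂ] H :=
  1 - (s : ℂ) • (ContinuousLinearMap.adjoint B * A'.resolvent w * B)

lemma phiG_diss {w : ℂ} (hw : 0 < s * w.im) (x : H) : 0 ≤ (⟪x, PhiG A B s w x⟫_ℂ).im := by
  have hw0 : w.im ≠ 0 := by rintro h; simp [h] at hw
  have e : ⟪x, PhiG A B s w x⟫_ℂ = ⟪x, x⟫_ℂ + (s : ℂ) * ⟪B x, A.resolvent w (B x)⟫_ℂ := by
    rw [PhiG, add_apply, inner_add_right, one_apply_eq_self, smul_apply, inner_smul_right,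
      mul_apply_eq_comp, mul_apply_eq_comp, ContinuousLinearMap.adjoint_inner_right]
  rw [e, Complex.add_im, Complex.im_ofReal_mul, res_im A hw0, inner_self_eq_norm_sq_to_K]
  have e : (((‖x‖ : ℝ) : ℂ) ^ 2) = ((‖x‖ ^ 2 : ℝ) : ℂ) := by
    push_cast; rfl
  erw [e, Complex.ofReal_im]
  rw [zero_add, ← mul_assoc]
  positivity

variable {A A' B s}
variable (hs : IsSumOf A' A ((s : ℂ) • (B * ContinuousLinearMap.adjoint B)))
include hs

lemma phi_psi {w : ℂ} (hw : w.im ≠ 0) : PhiG A B s w * PsiG A' B s w = 1 := by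
  have h := res_pert hs hw
  have e : PhiG A B s w * PsiG A' B s w = 1 + (s : ℂ) • (ContinuousLinearMap.adjoint B *
      ((A.resolvent w - A'.resolvent w) - A.resolvent w * ((s : ℂ) •
        (B * ContinuousLinearMap.adjoint B)) * A'.resolvent w) * B) := by
    simp only [PhiG, PsiG, mul_sub, sub_mul, mul_add, add_mul, smul_sub, smul_add, mul_smul_comm,
      smul_mul_assoc, mul_assoc, one_mul, mul_one]
    abel
  rw [e, h]; simp

lemma psi_phi {w : ℂ} (hw : w.im ≠ 0) : PsiG A' B s w * PhiG A B s w = 1 := by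
  have h := res_pert' hs hw
  have e : PsiG A' B s w * PhiG A B s w = 1 + (s : ℂ) • (ContinuousLinearMap.adjoint B *
      ((A.resolvent w - A'.resolvent w) - A'.resolvent w * ((s : ℂ) •
        (B * ContinuousLinearMap.adjoint B)) * A.resolvent w) * B) := by
    simp only [PhiG, PsiG, mul_sub, sub_mul, mul_add, add_mul, smul_sub, smul_add, mul_smul_comm,
      smul_mul_assoc, mul_assoc, one_mul, mul_one]
    abel
  rw [e, h]; simp

lemma psi_B {w : ℂ} (hw : w.im ≠ 0) :
    PsiG A' B s w * ContinuousLinearMap.adjoint B * A.resolvent w =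
      ContinuousLinearMap.adjoint B * A'.resolvent w := by
  have h := res_pert' hs hw
  have e : PsiG A' B s w * ContinuousLinearMap.adjoint B * A.resolvent w =
      ContinuousLinearMap.adjoint B * (A.resolvent w - A'.resolvent w * ((s : ℂ) •
        (B * ContinuousLinearMap.adjoint B)) * A.resolvent w) := by
    simp only [PsiG, mul_sub, sub_mul, mul_smul_comm,
      smul_mul_assoc, mul_assoc, one_mul]
  rw [e, ← h]; simp

omit hs in
lemma diff_traceClass (hB : IsHilbertSchmidt B)
    (hs : IsSumOf A' A ((s : ℂ) • (B * ContinuousLinearMap.adjoint B))) {w : ℂ} (hw : w.im ≠ 0) :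
    IsTraceClass (A.resolvent w - A'.resolvent w) := by
  have e : A.resolvent w - A'.resolvent w = (s : ℂ) • ((A.resolvent w * B) *
      (ContinuousLinearMap.adjoint B * A'.resolvent w)) := by
    rw [res_pert hs hw]
    simp only [mul_smul_comm, smul_mul_assoc, mul_assoc]
  rw [e]
  exact ((hB.mul_left _).traceClass (hB.adj.mul_right _)).smul _

lemma trace_formula (hB : IsHilbertSchmidt B) {z : ℂ} (hz : z.im ≠ 0) :
    trH (A.resolvent z - A'.resolvent z) =
      (s : ℂ) * betaForm B hB (PsiG A' B s z) (A.resolvent z * A.resolvent z) := by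
  have e : A.resolvent z - A'.resolvent z = (s : ℂ) • ((A.resolvent z * B) *
      (ContinuousLinearMap.adjoint B * A'.resolvent z)) := by
    rw [res_pert hs hz]
    simp only [mul_smul_comm, smul_mul_assoc, mul_assoc]
  rw [e, trH_smul, trH_comm (hB.mul_left _) (hB.adj.mul_right _), betaForm_apply, ← psi_B hs hz]
  simp only [mul_assoc]

lemma phi_good {z : ℂ} (hz : 0 < s * z.im) :
    ∃ C, ∀ᶠ w in 𝓝 z, 0 < s * w.im ∧ w.im ≠ 0 ∧ GoodT (PhiG A B s w) C := by
  have hz0 : z.im ≠ 0 := by rintro h; simp [h] at hz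
  have h1 : ∀ᶠ w : ℂ in 𝓝 z, 0 < s * w.im := by
    have : ContinuousAt (fun w : ℂ => s * w.im) z := by fun_prop
    exact this.eventually (lt_mem_nhds hz)
  have h2 : ∀ᶠ w : ℂ in 𝓝 z, ‖PsiG A' B s w‖ < ‖PsiG A' B s z‖ + 1 := by
    have : ContinuousAt (fun w : ℂ => ‖PsiG A' B s w‖) z := by
      have := res_cont A' hz0
      unfold PsiG
      fun_prop
    exact this.eventually (gt_mem_nhds (lt_add_one _))
  refine ⟨1 + 2 * (‖PsiG A' B s z‖ + 1), ?_⟩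
  filter_upwards [h1, h2] with w hw hw2
  have hw0 : w.im ≠ 0 := by rintro h; simp [h] at hw
  exact ⟨hw, hw0, goodT_of (phiG_diss A B s hw) (psi_phi hs hw0) (phi_psi hs hw0) hw2.le⟩

omit hs

/-- scalar integrand -/
def gI (hB : IsHilbertSchmidt B) (A : SelfAdjointOp H) (s : ℝ) (w : ℂ) (t : ℝ) : ℂ :=
  Complex.I * (betaForm B hB (((1 : ℂ) + (t : ℂ) * Complex.I)⁻¹ • Qt (PhiG A B s w) t)
    ((s : ℂ) • A.resolvent w))

lemma beta_flip_apply (hB : IsHilbertSchmidt B) (X Y : H →L[ℂ] H) :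
    (betaForm B hB).flip Y X = betaForm B hB X Y := rfl

lemma gI_integrable (hB : IsHilbertSchmidt B) {w : ℂ} {C : ℝ} (h : GoodT (PhiG A B s w) C) :
    IntegrableOn (gI hB A s w) (Set.Ioi 0) :=
  (((betaForm B hB).flip ((s : ℂ) • A.resolvent w)).integrable_comp h.integrable).const_mul _

lemma tr_log (hB : IsHilbertSchmidt B) {w : ℂ} {C : ℝ} (h : GoodT (PhiG A B s w) C) :
    trH (opLog (PhiG A B s w)) = ∫ t in Set.Ioi (0 : ℝ), gI hB A s w t := by
  have e := ((betaForm B hB).flip ((s : ℂ) • A.resolvent w)).integral_comp_comm h.integrable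
  unfold gI
  rw [integral_const_mul]
  simp only [beta_flip_apply] at e
  rw [e, h.opLog_eq, smul_mul_assoc, trH_smul, betaForm_apply]
  congr 2
  simp [PhiG, mul_assoc]

lemma gI_sub (hB : IsHilbertSchmidt B) {w z : ℂ} {C C' : ℝ} (h : GoodT (PhiG A B s w) C)
    (h' : GoodT (PhiG A B s z) C') (hw : w.im ≠ 0) (hz : z.im ≠ 0) {t : ℝ} (ht : 0 ≤ t) :
    gI hB A s w t - gI hB A s z t = (w - z) * (Complex.I * (s * betaForm B hB
      (Qt (PhiG A B s w) t * Qt (PhiG A B s z) t) (A.resolvent w * A.resolvent z))) := by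
  have key : ∀ {w : ℂ} {C : ℝ}, GoodT (PhiG A B s w) C →
      betaForm B hB (((1 : ℂ) + (t : ℂ) * Complex.I)⁻¹ • Qt (PhiG A B s w) t)
        ((s : ℂ) • A.resolvent w) = trH (-(logIntegrand (PhiG A B s w) t)) ∧
      IsTraceClass (-(logIntegrand (PhiG A B s w) t)) := by
    intro w C h
    have e : -(logIntegrand (PhiG A B s w) t) =
        ((((1 : ℂ) + (t : ℂ) * Complex.I)⁻¹ • Qt (PhiG A B s w) t) *
          ContinuousLinearMap.adjoint B) * (((s : ℂ) • A.resolvent w) * B) := by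
      rw [h.logIntegrand_eq ht, neg_neg]
      simp [PhiG, mul_assoc]
    rw [betaForm_apply, e]
    exact ⟨rfl, (hB.adj.mul_left _).traceClass (hB.mul_left _)⟩
  rw [gI, gI, (key h).1, (key h').1, ← mul_sub]
  have e1 : trH (-(logIntegrand (PhiG A B s w) t)) - trH (-(logIntegrand (PhiG A B s z) t)) =
      trH (Qt (PhiG A B s z) t - Qt (PhiG A B s w) t) := by
    have : Qt (PhiG A B s z) t - Qt (PhiG A B s w) t =
        -(logIntegrand (PhiG A B s w) t) + (-1 : ℂ) • -(logIntegrand (PhiG A B s z) t) := by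
      simp only [logIntegrand, Qt, neg_smul, one_smul]
      abel
    rw [this, trH_add (key h).2 ((key h').2.smul _), trH_smul]
    ring
  have e2 : Qt (PhiG A B s z) t - Qt (PhiG A B s w) t = ((w - z) * s) •
      ((Qt (PhiG A B s z) t * ContinuousLinearMap.adjoint B) *
        (A.resolvent w * A.resolvent z * B * Qt (PhiG A B s w) t)) := by
    have e3 : PhiG A B s w - PhiG A B s z = ((w - z) * s) • (ContinuousLinearMap.adjoint B *
        (A.resolvent w * A.resolvent z) * B) := by
      rw [mul_comm, mul_smul, ← smul_mul_assoc, ← mul_smul_comm (w - z), ← res_sub A hw hz]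
      simp only [PhiG, mul_sub, sub_mul, smul_sub]
      abel
    rw [h'.Q_sub h ht, e3]
    simp only [mul_smul_comm, smul_mul_assoc, mul_assoc]
  rw [e1, e2, trH_smul, trH_comm (hB.adj.mul_left _) ((hB.mul_left _).mul_right _),
    betaForm_apply]
  have e4 : A.resolvent w * A.resolvent z * B * Qt (PhiG A B s w) t *
      (Qt (PhiG A B s z) t * ContinuousLinearMap.adjoint B) =
      (A.resolvent w * A.resolvent z * B) * (Qt (PhiG A B s w) t *
      Qt (PhiG A B s z) t * ContinuousLinearMap.adjoint B) := by
    simp only [mul_assoc]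
  rw [e4, trH_comm (hB.mul_left _) (hB.adj.mul_left _)]
  ring

theorem core (hB : IsHilbertSchmidt B)
    (hs : IsSumOf A' A ((s : ℂ) • (B * ContinuousLinearMap.adjoint B))) {z : ℂ}
    (hz : 0 < s * z.im) :
    HasDerivAt (fun w => trH (opLog (PhiG A B s w))) (trH (A.resolvent z - A'.resolvent z)) z := by
  have hz0 : z.im ≠ 0 := by rintro h; simp [h] at hz
  obtain ⟨C, hC⟩ := phi_good hs hz
  have hgz : GoodT (PhiG A B s z) C := hC.self_of_nhds.2.2
  have hC0 := hgz.nonneg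
  set hh : ℂ → ℝ → ℂ := fun w t => Complex.I * (s * betaForm B hB
      (Qt (PhiG A B s w) t * Qt (PhiG A B s z) t) (A.resolvent w * A.resolvent z)) with hhdef
  have hRc := res_cont A hz0
  have hPc : ContinuousAt (fun w => PhiG A B s w) z := by unfold PhiG; fun_prop
  -- the value of the limit integral
  have hval : ∫ t in Set.Ioi (0 : ℝ), hh z t = trH (A.resolvent z - A'.resolvent z) := by
    set β' := (betaForm B hB).flip (A.resolvent z * A.resolvent z) with hβ
    have hd : ∀ t ∈ Set.Ici (0 : ℝ), HasDerivAt (fun t => -(s * β' (Qt (PhiG A B s z) t)))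
        (hh z t) t := by
      intro t ht
      have := (((β'.restrictScalars ℝ).hasFDerivAt.comp_hasDerivAt t
        (hgz.hasDerivAt ht)).const_mul (s : ℂ)).neg
      refine this.congr_deriv ?_
      simp only [hhdef, hβ, ContinuousLinearMap.coe_restrictScalars', map_neg, map_smul,
        beta_flip_apply, smul_eq_mul]
      ring
    have hi : IntegrableOn (hh z) (Set.Ioi 0) := by
      refine integrableOn_of (|s| * (‖betaForm B hB‖ * (C * C) *
        ‖A.resolvent z * A.resolvent z‖)) ?_ ?_
      · have := hgz.cont
        have h2 : ContinuousOn (fun t => β' (Qt (PhiG A B s z) t * Qt (PhiG A B s z) t))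
          (Set.Ici 0) := β'.continuous.comp_continuousOn (this.mul this)
        exact (h2.const_mul (s : ℂ)).const_mul Complex.I
      · intro t ht
        rw [hhdef]
        simp only [norm_mul, Complex.norm_I, one_mul, Complex.norm_real, Real.norm_eq_abs]
        calc _ ≤ |s| * (‖betaForm B hB‖ * ((C * (1 + t)⁻¹) * (C * (1 + t)⁻¹)) *
              ‖A.resolvent z * A.resolvent z‖) := by
              gcongr
              refine ((betaForm B hB).le_opNorm₂ _ _).trans ?_
              gcongr
              refine (norm_mul_le _ _).trans ?_
              gcongr
              · exact (hgz t ht).2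
              · exact (hgz t ht).2
          _ = _ := by ring
    have hl : Tendsto (fun t => -(s * β' (Qt (PhiG A B s z) t))) atTop (𝓝 0) := by
      have hq : Tendsto (Qt (PhiG A B s z)) atTop (𝓝 0) := by
        refine squeeze_zero_norm' (a := fun t => C * (1 + t)⁻¹) ?_ ?_
        · filter_upwards [eventually_ge_atTop 0] with t ht using (hgz t ht).2
        · have := (tendsto_inv_atTop_zero.comp
            (tendsto_atTop_add_const_left atTop (1 : ℝ) tendsto_id)).const_mul C
          simpa using this
      have h3 := (((β'.continuous.tendsto 0).comp hq).const_mul (s : ℂ)).neg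
      simpa using h3
    rw [integral_Ioi_of_hasDerivAt_of_tendsto' hd hi hl, trace_formula hs hB hz0]
    have hQ0 : Qt (PhiG A B s z) 0 = PsiG A' B s z := by
      have : Qt (PhiG A B s z) 0 = Ring.inverse (PhiG A B s z) := by simp [Qt]
      rw [this]
      exact Ring.inverse_unit (⟨PhiG A B s z, PsiG A' B s z, phi_psi hs hz0, psi_phi hs hz0⟩ :
        (H →L[ℂ] H)ˣ)
    rw [hQ0, hβ, beta_flip_apply]
    ring
  rw [hasDerivAt_iff_tendsto_slope, ← hval]
  have hslope : ∀ᶠ w in 𝓝[≠] z, ∫ t in Set.Ioi (0 : ℝ), hh w t =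
      slope (fun w => trH (opLog (PhiG A B s w))) z w := by
    filter_upwards [hC.filter_mono nhdsWithin_le_nhds, self_mem_nhdsWithin] with w hw hwz
    have hwz' : w - z ≠ 0 := sub_ne_zero.2 hwz
    rw [slope_def_field, tr_log hB hw.2.2, tr_log hB hgz,
      ← integral_sub (gI_integrable hB hw.2.2) (gI_integrable hB hgz),
      setIntegral_congr_fun measurableSet_Ioi
        (fun t (ht : 0 < t) => gI_sub hB hw.2.2 hgz hw.2.1 hz0 ht.le), integral_const_mul (w - z),
      mul_div_cancel_left₀ _ hwz']
  refine Tendsto.congr' hslope ?_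
  have hbR : ∀ᶠ w in 𝓝 z, ‖A.resolvent w * A.resolvent z‖ <
      ‖A.resolvent z * A.resolvent z‖ + 1 := by
    have : ContinuousAt (fun w : ℂ => ‖A.resolvent w * A.resolvent z‖) z := by fun_prop
    exact this.eventually (gt_mem_nhds (lt_add_one _))
  refine tendsto_integral_filter_of_dominated_convergence
    (fun t => (|s| * (‖betaForm B hB‖ * (C * C) *
        (‖A.resolvent z * A.resolvent z‖ + 1))) * ((1 + t)⁻¹ * (1 + t)⁻¹)) ?_ ?_
      (integrable_bound _) ?_
  · filter_upwards [hC.filter_mono nhdsWithin_le_nhds] with w hw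
    have h2 : ContinuousOn (fun t => (betaForm B hB).flip (A.resolvent w * A.resolvent z)
        (Qt (PhiG A B s w) t * Qt (PhiG A B s z) t)) (Set.Ici 0) :=
      ((betaForm B hB).flip (A.resolvent w * A.resolvent z)).continuous.comp_continuousOn
        (hw.2.2.cont.mul hgz.cont)
    have h3 := (h2.const_mul (s : ℂ)).const_mul Complex.I
    exact (h3.mono Set.Ioi_subset_Ici_self).aestronglyMeasurable measurableSet_Ioi
  · filter_upwards [hC.filter_mono nhdsWithin_le_nhds,
      hbR.filter_mono nhdsWithin_le_nhds] with w hw hwR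
    refine (ae_restrict_mem measurableSet_Ioi).mono fun t ht => ?_
    have ht : 0 ≤ t := le_of_lt ht
    rw [hhdef]
    simp only [norm_mul, Complex.norm_I, one_mul, Complex.norm_real, Real.norm_eq_abs]
    calc _ ≤ |s| * (‖betaForm B hB‖ * ((C * (1 + t)⁻¹) * (C * (1 + t)⁻¹)) *
          (‖A.resolvent z * A.resolvent z‖ + 1)) := by
          gcongr
          refine ((betaForm B hB).le_opNorm₂ _ _).trans ?_
          gcongr
          refine (norm_mul_le _ _).trans ?_
          gcongr
          · exact (hw.2.2 t ht).2
          · exact (hgz t ht).2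
      _ = _ := by ring
  · refine (ae_restrict_mem measurableSet_Ioi).mono fun t ht => ?_
    have ht : 0 ≤ t := le_of_lt ht
    have hq : ContinuousAt (fun w => Qt (PhiG A B s w) t) z := by
      obtain ⟨u, hu⟩ := (hgz t ht).1
      have h1 := NormedRing.inverse_continuousAt u
      rw [hu] at h1
      have h2 : ContinuousAt (fun w => PhiG A B s w +
        ((t : ℂ) * Complex.I) • (1 : H →L[ℂ] H)) z := by fun_prop
      exact ContinuousAt.comp (f := fun w => PhiG A B s w +
        ((t : ℂ) * Complex.I) • (1 : H →L[ℂ] H)) h1 h2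
    have h3 : ContinuousAt (fun w => hh w t) z := by
      rw [hhdef]
      fun_prop
    exact h3.tendsto.mono_left nhdsWithin_le_nhds

end Core

lemma phiG_adj (A : SelfAdjointOp H) (B : H →L[ℂ] H) (s : ℝ) {w : ℂ} (hw : w.im ≠ 0) :
    ContinuousLinearMap.adjoint (PhiG A B s w) = PhiG A B s ((starRingEnd ℂ) w) := by
  rw [PhiG, PhiG, map_add, map_smulₛₗ, adj_mul, adj_mul, res_adj A hw,
    ContinuousLinearMap.adjoint_adjoint, Complex.conj_ofReal, mul_assoc]
  congr 1
  exact star_one (H →L[ℂ] H)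

theorem core_anti {A A' : SelfAdjointOp H} {B : H →L[ℂ] H} {s : ℝ} (hB : IsHilbertSchmidt B)
    (hs : IsSumOf A' A ((s : ℂ) • (B * ContinuousLinearMap.adjoint B))) {z : ℂ}
    (hz : s * z.im < 0) :
    HasDerivAt (fun w => trH (opLogAnti (PhiG A B s w)))
      (trH (A.resolvent z - A'.resolvent z)) z := by
  have hz0 : z.im ≠ 0 := by rintro h; simp [h] at hz
  have hc : 0 < s * ((starRingEnd ℂ) z).im := by rw [Complex.conj_im]; linarith
  have h := (core hB hs hc).conj_conj
  have hz0' : ((starRingEnd ℂ) z).im ≠ 0 := by simpa using hz0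
  rw [← trH_adj, map_sub, res_adj A hz0', res_adj A' hz0', Complex.conj_conj] at h
  refine h.congr_of_eventuallyEq ?_
  have h1 : ∀ᶠ w : ℂ in 𝓝 z, w.im ≠ 0 :=
    Complex.continuous_im.continuousAt.eventually_ne hz0
  filter_upwards [h1] with w hw
  simp only [Function.comp, opLogAnti, phiG_adj A B s hw, trH_adj]


lemma jplus_adj {J : H →L[ℂ] H} (hJ : IsSelfAdjoint J) :
    ContinuousLinearMap.adjoint (Jplus J) = Jplus J := by
  have h : ContinuousLinearMap.adjoint J = J := hJ
  have h1 : ContinuousLinearMap.adjoint (1 : H →L[ℂ] H) = 1 := star_one (H →L[ℂ] H)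
  rw [Jplus, map_smulₛₗ, map_add, h, h1]
  have hc : (starRingEnd ℂ) (2 : ℂ)⁻¹ = (2 : ℂ)⁻¹ := by
    rw [map_inv₀]; exact congrArg _ (Complex.conj_ofNat 2)
  rw [hc]

lemma jminus_adj {J : H →L[ℂ] H} (hJ : IsSelfAdjoint J) :
    ContinuousLinearMap.adjoint (Jminus J) = Jminus J := by
  have h : ContinuousLinearMap.adjoint J = J := hJ
  have h1 : ContinuousLinearMap.adjoint (1 : H →L[ℂ] H) = 1 := star_one (H →L[ℂ] H)
  rw [Jminus, map_smulₛₗ, map_sub, h, h1]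
  have hc : (starRingEnd ℂ) (2 : ℂ)⁻¹ = (2 : ℂ)⁻¹ := by
    rw [map_inv₀]; exact congrArg _ (Complex.conj_ofNat 2)
  rw [hc]

lemma jplus_sq {J : H →L[ℂ] H} (hJ2 : J * J = 1) : Jplus J * Jplus J = Jplus J := by
  simp only [Jplus, smul_mul_assoc, mul_smul_comm, smul_smul, mul_add, add_mul, one_mul, mul_one,
    hJ2]
  module

lemma jminus_sq {J : H →L[ℂ] H} (hJ2 : J * J = 1) : Jminus J * Jminus J = Jminus J := by
  simp only [Jminus, smul_mul_assoc, mul_smul_comm, smul_smul, mul_sub, sub_mul, one_mul, mul_one,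
    hJ2]
  module

lemma j_eq (J : H →L[ℂ] H) : J = Jplus J - Jminus J := by
  simp only [Jplus, Jminus]
  module

lemma logHerg_deriv {A A' : SelfAdjointOp H} {B : H →L[ℂ] H} (hB : IsHilbertSchmidt B)
    (hs : IsSumOf A' A (((1 : ℝ) : ℂ) • (B * ContinuousLinearMap.adjoint B))) {z : ℂ}
    (hz : z.im ≠ 0) :
    HasDerivAt (fun w => trH (logHerg (PhiG A B 1) w))
      (trH (A.resolvent z - A'.resolvent z)) z := by
  rcases lt_or_gt_of_ne hz with h | h
  · refine (core_anti hB hs (by linarith)).congr_of_eventuallyEq ?_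
    filter_upwards [Complex.continuous_im.continuousAt.eventually (gt_mem_nhds h)] with w hw
    rw [logHerg, if_neg (not_lt.2 (le_of_lt hw))]
  · refine (core hB hs (by linarith)).congr_of_eventuallyEq ?_
    filter_upwards [Complex.continuous_im.continuousAt.eventually (lt_mem_nhds h)] with w hw
    rw [logHerg, if_pos hw]

lemma logAntiHerg_deriv {A A' : SelfAdjointOp H} {B : H →L[ℂ] H} (hB : IsHilbertSchmidt B)
    (hs : IsSumOf A' A (((-1 : ℝ) : ℂ) • (B * ContinuousLinearMap.adjoint B))) {z : ℂ}
    (hz : z.im ≠ 0) :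
    HasDerivAt (fun w => trH (logAntiHerg (PhiG A B (-1)) w))
      (trH (A.resolvent z - A'.resolvent z)) z := by
  rcases lt_or_gt_of_ne hz with h | h
  · refine (core hB hs (by linarith)).congr_of_eventuallyEq ?_
    filter_upwards [Complex.continuous_im.continuousAt.eventually (gt_mem_nhds h)] with w hw
    rw [logAntiHerg, if_neg (not_lt.2 (le_of_lt hw))]
  · refine (core_anti hB hs (by linarith)).congr_of_eventuallyEq ?_
    filter_upwards [Complex.continuous_im.continuousAt.eventually (lt_mem_nhds h)] with w hw
    rw [logAntiHerg, if_pos hw]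


/-- Lemma 3.3: under Hypothesis 3.1, with `H₊ = H₀ + KJ₊K*` and `H = H₀ + KJK*`, the
resolvent differences are trace class and
`tr((H₀-z)⁻¹ - (H₊-z)⁻¹) = d/dz tr log Φ₊(z)`,
`tr((H₊-z)⁻¹ - (H-z)⁻¹) = d/dz tr log Φ̃₋(z)` for `z ∈ ℂ∖ℝ`. -/
theorem trace_resolvent_diff_eq_deriv_trace_log [SeparableSpace H]
    (H0 Hp Hfull : SelfAdjointOp H) (J K : H →L[ℂ] H)
    (hJ : IsSelfAdjoint J) (hJ2 : J * J = 1) (hK : IsHilbertSchmidt K)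
    (hsump : IsSumOf Hp H0 (K * Jplus J * ContinuousLinearMap.adjoint K))
    (hsum : IsSumOf Hfull H0 (K * J * ContinuousLinearMap.adjoint K)) :
    ∀ z : ℂ, z.im ≠ 0 →
      IsTraceClass (H0.resolvent z - Hp.resolvent z) ∧
      IsTraceClass (Hp.resolvent z - Hfull.resolvent z) ∧
      HasDerivAt (fun w : ℂ => trH (logHerg (PhiPlus H0 J K) w))
        (trH (H0.resolvent z - Hp.resolvent z)) z ∧
      HasDerivAt (fun w : ℂ => trH (logAntiHerg (PhiMinusT Hp J K) w))
        (trH (Hp.resolvent z - Hfull.resolvent z)) z := by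
  intro z hz
  have hBp : IsHilbertSchmidt (K * Jplus J) := hK.mul_right _
  have hBm : IsHilbertSchmidt (K * Jminus J) := hK.mul_right _
  have hVp : K * Jplus J * ContinuousLinearMap.adjoint K =
      ((1 : ℝ) : ℂ) • ((K * Jplus J) * ContinuousLinearMap.adjoint (K * Jplus J)) := by
    rw [adj_mul, jplus_adj hJ, mul_assoc K (Jplus J) (Jplus J * _), ← mul_assoc (Jplus J) (Jplus J), jplus_sq hJ2,
      Complex.ofReal_one, one_smul, mul_assoc]
  have hVm : ((-1 : ℝ) : ℂ) • ((K * Jminus J) * ContinuousLinearMap.adjoint (K * Jminus J)) =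
      -(K * Jminus J * ContinuousLinearMap.adjoint K) := by
    rw [adj_mul, jminus_adj hJ, mul_assoc K, ← mul_assoc (Jminus J) (Jminus J), jminus_sq hJ2,
      Complex.ofReal_neg, Complex.ofReal_one, neg_smul, one_smul, mul_assoc]
  have h1 : IsSumOf Hp H0
      (((1 : ℝ) : ℂ) • ((K * Jplus J) * ContinuousLinearMap.adjoint (K * Jplus J))) := by
    rw [← hVp]; exact hsump
  have h2 : IsSumOf Hfull Hp
      (((-1 : ℝ) : ℂ) • ((K * Jminus J) * ContinuousLinearMap.adjoint (K * Jminus J))) := by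
    rw [hVm]
    refine ⟨hsum.1.trans hsump.1.symm, fun x hx hxp => ?_⟩
    have hx0 : x ∈ H0.dom := hsump.1 ▸ hxp
    rw [hsum.2 x hx hx0, hsump.2 x hxp hx0, add_assoc, ← add_apply]
    have e : K * J * ContinuousLinearMap.adjoint K = K * Jplus J * ContinuousLinearMap.adjoint K +
        -(K * Jminus J * ContinuousLinearMap.adjoint K) := by
      conv_lhs => rw [j_eq J]
      rw [mul_sub, sub_mul, sub_eq_add_neg]
    rw [e]
  have e1 : PhiPlus H0 J K = PhiG H0 (K * Jplus J) 1 := by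
    funext w
    rw [PhiPlus, PhiG, adj_mul, jplus_adj hJ, Complex.ofReal_one, one_smul]
    simp only [mul_assoc]
  have e2 : PhiMinusT Hp J K = PhiG Hp (K * Jminus J) (-1) := by
    funext w
    rw [PhiMinusT, PhiG, adj_mul, jminus_adj hJ, Complex.ofReal_neg, Complex.ofReal_one, neg_smul,
      one_smul, ← sub_eq_add_neg]
    simp only [mul_assoc]
  rw [e1, e2]
  exact ⟨diff_traceClass hBp h1 hz, diff_traceClass hBm h2 hz, logHerg_deriv hBp h1 hz,
    logAntiHerg_deriv hBm h2 hz⟩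

end SpectralShift
end
end

section
/- Assume Hypothesis 3.1 and the setting of Lemma 3.3, and let Ξ₊(λ) (respectively Ξ₋(λ)) be the spectral shift operators, i.e., the a.e.-defined trace class operator families with 0 ≤ Ξ±(λ) ≤ I± obtained from the exponential Herglotz representation of log(Φ₊(z)) (respectively log(Φ̃₋(z))). Then ξ±(λ) := tr_{H±}(Ξ±(λ)) satisfy 0 ≤ ξ± ∈ L¹(ℝ; dλ), and the representations simplify to log(Φ₊(z)) = ∫_ℝ dλ Ξ₊(λ)(λ − z)⁻¹ and log(Φ̃₋(z)) = −∫_ℝ dλ Ξ₋(λ)(λ − z)⁻¹ for z ∈ ℂ∖ℝ (integrals in the weak sense), with no additive constant and no subtraction of λ(1+λ²)⁻¹. -/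
open Complex Filter MeasureTheory TopologicalSpace ContinuousLinearMap
open scoped InnerProductSpace Topology

noncomputable section

namespace SpectralShift

variable {H : Type*} [NormedAddCommGroup H] [InnerProductSpace ℂ H] [CompleteSpace H]

lemma resolvent_bound (A : SelfAdjointOp H) {z : ℂ} (hz : z.im ≠ 0) :
    ‖A.resolvent z‖ ≤ |z.im|⁻¹ := by
  refine ContinuousLinearMap.opNorm_le_bound _ (by positivity) fun x => ?_
  set u : A.dom := ⟨A.resolvent z x, A.resolvent_mem hz x⟩ with hu
  have h1 : A.op u - z • (u : H) = x := A.op_resolvent hz x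
  have h2 := A.symmetric u u
  have h3 : (⟪(u : H), A.op u⟫_ℂ).im = 0 := by
    rw [← Complex.conj_eq_iff_im, inner_conj_symm]; exact h2
  have h4 : (⟪(u : H), x⟫_ℂ).im = - z.im * ‖(u : H)‖ ^ 2 := by
    rw [← h1, inner_sub_right, inner_smul_right, inner_self_eq_norm_sq_to_K, Complex.sub_im, h3]
    simp [← Complex.ofReal_pow]
  have h5 : |z.im| * ‖(u : H)‖ ^ 2 ≤ ‖(u : H)‖ * ‖x‖ := by
    calc |z.im| * ‖(u : H)‖ ^ 2 = |(⟪(u : H), x⟫_ℂ).im| := by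
          rw [h4, abs_mul, abs_neg, abs_of_nonneg (sq_nonneg ‖(u : H)‖)]
      _ ≤ ‖⟪(u : H), x⟫_ℂ‖ := Complex.abs_im_le_norm _
      _ ≤ _ := norm_inner_le_norm _ _
  have hp : 0 < |z.im| := abs_pos.mpr hz
  change ‖(u : H)‖ ≤ _
  rw [inv_mul_eq_div, le_div_iff₀ hp]
  rcases (norm_nonneg (u : H)).eq_or_lt with h | h
  · rw [← h]; simp
  · nlinarith

lemma logIntegrand_eq (A : H →L[ℂ] H) (hA : ‖A‖ ≤ 1 / 2) (t : ℝ) :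
    IsUnit ((1 + A) + ((t : ℂ) * Complex.I) • (1 : H →L[ℂ] H)) ∧
    ∃ Q : H →L[ℂ] H, ‖Q‖ ≤ 2 ∧
      logIntegrand (1 + A) t = (((1 : ℂ) + (t : ℂ) * Complex.I)⁻¹ ^ 2) • (A * Q * A - A) := by
  set c : ℂ := (1 : ℂ) + (t : ℂ) * Complex.I with hc
  have hcn : 1 ≤ ‖c‖ := by
    have := Complex.abs_re_le_norm c
    simpa [hc] using this
  have hc0 : c ≠ 0 := by
    intro h; rw [h] at hcn; norm_num at hcn
  have hci : ‖c⁻¹‖ ≤ 1 := by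
    rw [norm_inv]; exact inv_le_one_of_one_le₀ hcn
  have hT : (1 + A) + ((t : ℂ) * Complex.I) • (1 : H →L[ℂ] H) = c • (1 : H →L[ℂ] H) + A := by
    rw [hc, add_smul, one_smul]; abel
  have hun : IsUnit (c • (1 : H →L[ℂ] H) + A) := by
    have h1 : IsUnit (1 - (-(c⁻¹ • A))) := by
      apply isUnit_one_sub_of_norm_lt_one
      rw [norm_neg, norm_smul]
      have := norm_nonneg A
      nlinarith [norm_nonneg c⁻¹]
    have h2 : c • (1 : H →L[ℂ] H) + A = (Units.mk0 c hc0) • (1 - (-(c⁻¹ • A))) := by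
      rw [Units.smul_mk0, sub_neg_eq_add, smul_add, smul_smul, mul_inv_cancel₀ hc0, one_smul]
    rw [h2]
    exact h1.smul _
  refine ⟨hT ▸ hun, Ring.inverse (c • (1 : H →L[ℂ] H) + A), ?_, ?_⟩
  all_goals
    have e1 := Ring.inverse_mul_cancel _ hun
    have e2 := Ring.mul_inverse_cancel _ hun
    set Q := Ring.inverse (c • (1 : H →L[ℂ] H) + A) with hQ
    have f1 : Q = c⁻¹ • (1 - Q * A) := by
      rw [← e1, mul_add, add_sub_cancel_right, mul_smul_comm, mul_one, smul_smul,
        inv_mul_cancel₀ hc0, one_smul]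
    have f2 : Q = c⁻¹ • (1 - A * Q) := by
      rw [← e2, add_mul, add_sub_cancel_right, smul_mul_assoc, one_mul, smul_smul,
        inv_mul_cancel₀ hc0, one_smul]
  · have h1 : ‖Q‖ ≤ 1 + ‖Q‖ * (1 / 2) := by
      calc ‖Q‖ = ‖c⁻¹‖ * ‖1 - Q * A‖ := by conv_lhs => rw [f1, norm_smul]
        _ ≤ 1 * ‖1 - Q * A‖ := by gcongr
        _ ≤ ‖(1 : H →L[ℂ] H)‖ + ‖Q * A‖ := by rw [one_mul]; exact norm_sub_le _ _
        _ ≤ 1 + ‖Q‖ * ‖A‖ := by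
          gcongr
          · exact ContinuousLinearMap.norm_id_le
          · exact norm_mul_le _ _
        _ ≤ _ := by gcongr
    linarith
  · rw [logIntegrand, hT, ← hQ, ← hc]
    have g1 : Q - c⁻¹ • (1 : H →L[ℂ] H) = - (c⁻¹ • (Q * A)) := by
      conv_lhs => rw [f1]
      rw [smul_sub]; abel
    have g2 : Q * A = c⁻¹ • (A - A * Q * A) := by
      conv_lhs => rw [f2]
      rw [smul_mul_assoc, sub_mul, one_mul]
    rw [g1, g2, smul_smul, ← smul_neg, neg_sub, pow_two]

lemma norm_c_sq (t : ℝ) : ‖((1 : ℂ) + (t : ℂ) * Complex.I)⁻¹ ^ 2‖ = (1 + t ^ 2)⁻¹ := by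
  rw [norm_pow, norm_inv, inv_pow]
  congr 1
  rw [Complex.sq_norm, Complex.normSq_apply]
  simp
  ring

lemma opLog_bound (L B : H →L[ℂ] H) (hB : ‖L‖ ^ 2 * ‖B‖ ≤ 1 / 2) (f g : H) :
    ‖⟪f, opLog (1 + adjoint L * B * L) g⟫_ℂ‖ ≤ Real.pi * ‖B‖ * (‖L f‖ * ‖L g‖) := by
  set A := adjoint L * B * L with hAdef
  have hLa : ‖adjoint L‖ = ‖L‖ := LinearIsometryEquiv.norm_map _ _
  have hA : ‖A‖ ≤ 1 / 2 := by
    calc ‖A‖ ≤ ‖adjoint L‖ * ‖B‖ * ‖L‖ :=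
          (norm_mul_le _ _).trans (by gcongr; exact norm_mul_le _ _)
      _ = ‖L‖ ^ 2 * ‖B‖ := by rw [hLa]; ring
      _ ≤ _ := hB
  have hbd : ∀ t, ‖logIntegrand (1 + A) t‖ ≤ (1 + t ^ 2)⁻¹ := by
    intro t
    obtain ⟨-, Q, hQ, h⟩ := logIntegrand_eq A hA t
    rw [h, norm_smul, norm_c_sq]
    have : ‖A * Q * A - A‖ ≤ 1 := by
      calc ‖A * Q * A - A‖ ≤ ‖A‖ * ‖Q‖ * ‖A‖ + ‖A‖ :=
            (norm_sub_le _ _).trans (by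
              gcongr; exact (norm_mul_le _ _).trans (by gcongr; exact norm_mul_le _ _))
        _ ≤ (1 / 2) * 2 * (1 / 2) + 1 / 2 := by gcongr
        _ = 1 := by norm_num
    calc _ ≤ (1 + t ^ 2)⁻¹ * 1 := by gcongr
      _ = _ := mul_one _
  have hcont : Continuous (logIntegrand (1 + A)) := by
    unfold logIntegrand
    refine Continuous.sub ?_ ?_
    · rw [continuous_iff_continuousAt]
      intro t
      obtain ⟨u, hu⟩ := (logIntegrand_eq A hA t).1
      have h1 : ContinuousAt Ring.inverse
          ((1 + A) + ((t : ℂ) * Complex.I) • (1 : H →L[ℂ] H)) := by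
        rw [← hu]; exact NormedRing.inverse_continuousAt u
      have h2 : Continuous fun t : ℝ => (1 + A) + ((t : ℂ) * Complex.I) • (1 : H →L[ℂ] H) := by
        fun_prop
      exact ContinuousAt.comp (f := fun t : ℝ =>
        (1 + A) + ((t : ℂ) * Complex.I) • (1 : H →L[ℂ] H)) h1 h2.continuousAt
    · have hcc : Continuous fun t : ℝ => (1 : ℂ) + (t : ℂ) * Complex.I := by fun_prop
      refine (hcc.inv₀ ?_).smul (continuous_const (y := (1 : H →L[ℂ] H)))
      intro t h
      have := congrArg Complex.re h
      simp at this
  have hint : Integrable (logIntegrand (1 + A)) :=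
    integrable_inv_one_add_sq.mono' hcont.aestronglyMeasurable (Eventually.of_forall hbd)
  have hlim0 : Tendsto (fun R : ℝ => ∫ t in (0:ℝ)..R, logIntegrand (1 + A) t) atTop
      (𝓝 (∫ t in Set.Ioi (0 : ℝ), logIntegrand (1 + A) t)) :=
    intervalIntegral_tendsto_integral_Ioi (0 : ℝ) hint.integrableOn tendsto_id
  have hlim := hlim0.const_smul (-Complex.I)
  have hlog : opLog (1 + A) = (-Complex.I) • ∫ t in Set.Ioi (0 : ℝ), logIntegrand (1 + A) t :=
    hlim.limUnder_eq
  rw [hlog, ContinuousLinearMap.smul_apply, inner_smul_right, norm_mul, norm_neg, Complex.norm_I,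
    one_mul]
  let φ : (H →L[ℂ] H) →L[ℂ] ℂ :=
    (innerSL ℂ f).comp (ContinuousLinearMap.apply ℂ H g)
  have hφ : ∀ T : H →L[ℂ] H, φ T = ⟪f, T g⟫_ℂ := fun T => rfl
  rw [← hφ, ← φ.integral_comp_comm hint.integrableOn]
  have hpt : ∀ t, ‖φ (logIntegrand (1 + A) t)‖ ≤ (1 + t ^ 2)⁻¹ * (2 * ‖B‖ * (‖L f‖ * ‖L g‖)) := by
    intro t
    obtain ⟨-, Q, hQ, h⟩ := logIntegrand_eq A hA t
    rw [hφ, h, ContinuousLinearMap.smul_apply, inner_smul_right, norm_mul, norm_c_sq]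
    gcongr
    have e : ⟪f, (A * Q * A - A) g⟫_ℂ =
        ⟪L f, (B * (L * Q * adjoint L) * B) (L g)⟫_ℂ - ⟪L f, B (L g)⟫_ℂ := by
      rw [ContinuousLinearMap.sub_apply, inner_sub_right, ← ContinuousLinearMap.adjoint_inner_right,
        ← ContinuousLinearMap.adjoint_inner_right]
      rfl
    rw [e]
    have hn : ‖B * (L * Q * adjoint L) * B‖ ≤ ‖B‖ := by
      calc ‖B * (L * Q * adjoint L) * B‖ ≤ ‖B‖ * (‖L‖ * ‖Q‖ * ‖adjoint L‖) * ‖B‖ := by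
            refine (norm_mul_le _ _).trans ?_
            gcongr
            refine (norm_mul_le _ _).trans ?_
            gcongr
            refine (norm_mul_le _ _).trans ?_
            gcongr
            exact norm_mul_le _ _
        _ ≤ ‖B‖ * (‖L‖ * 2 * ‖L‖) * ‖B‖ := by rw [hLa]; gcongr
        _ = (‖L‖ ^ 2 * ‖B‖) * (2 * ‖B‖) := by ring
        _ ≤ (1 / 2) * (2 * ‖B‖) := by gcongr
        _ = ‖B‖ := by ring
    calc _ ≤ ‖⟪L f, (B * (L * Q * adjoint L) * B) (L g)⟫_ℂ‖ + ‖⟪L f, B (L g)⟫_ℂ‖ := norm_sub_le _ _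
      _ ≤ ‖L f‖ * (‖B‖ * ‖L g‖) + ‖L f‖ * (‖B‖ * ‖L g‖) := by
          gcongr
          · refine (norm_inner_le_norm _ _).trans ?_
            gcongr
            exact ContinuousLinearMap.le_of_opNorm_le _ hn _
          · refine (norm_inner_le_norm _ _).trans ?_
            gcongr
            exact ContinuousLinearMap.le_opNorm _ _
      _ = _ := by ring
  calc _ ≤ ∫ t in Set.Ioi (0 : ℝ), (1 + t ^ 2)⁻¹ * (2 * ‖B‖ * (‖L f‖ * ‖L g‖)) :=
        norm_integral_le_of_norm_le (integrable_inv_one_add_sq.integrableOn.mul_const _)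
          (Eventually.of_forall hpt)
    _ = _ := by
        rw [integral_mul_const, integral_Ioi_inv_one_add_sq, Real.arctan_zero]
        ring

lemma kernel_im (s y l : ℝ) (hs : s ^ 2 = 1) :
    (((l : ℂ) - (s * y : ℝ) * Complex.I)⁻¹ - (l : ℂ) * ((1 : ℂ) + (l : ℂ) ^ 2)⁻¹).im
      = s * (y / (l ^ 2 + y ^ 2)) := by
  have h1 : ((l : ℂ) * ((1 : ℂ) + (l : ℂ) ^ 2)⁻¹).im = 0 := by
    have : (l : ℂ) * ((1 : ℂ) + (l : ℂ) ^ 2)⁻¹ = ((l * (1 + l ^ 2)⁻¹ : ℝ) : ℂ) := by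
      push_cast; rfl
    rw [this, Complex.ofReal_im]
  rw [Complex.sub_im, h1, Complex.inv_im, Complex.normSq_apply]
  simp
  have : l * l + s * y * (s * y) = l ^ 2 + y ^ 2 := by
    have : s * y * (s * y) = s ^ 2 * y ^ 2 := by ring
    rw [this, hs]; ring
  rw [this]; ring

lemma core_diag (Ξ : ℝ → H →L[ℂ] H) (C : H →L[ℂ] H) (hC : IsSelfAdjoint C)
    (hpos : ∀ᵐ l ∂(volume : Measure ℝ), (Ξ l).IsPositive)
    (f : H) (G : ℂ → ℂ) (hmeas : Measurable fun l : ℝ => ⟪f, Ξ l f⟫_ℂ)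
    (hrep : ∀ z : ℂ, z.im ≠ 0 →
      Integrable (fun l : ℝ =>
        (((l : ℂ) - z)⁻¹ - (l : ℂ) * ((1 : ℂ) + (l : ℂ) ^ 2)⁻¹) * ⟪f, Ξ l f⟫_ℂ) ∧
      G z = ⟪f, C f⟫_ℂ +
        ∫ l : ℝ, (((l : ℂ) - z)⁻¹ - (l : ℂ) * ((1 : ℂ) + (l : ℂ) ^ 2)⁻¹) * ⟪f, Ξ l f⟫_ℂ)
    (s : ℝ) (hs : s ^ 2 = 1) (Y M : ℝ) (hY : 0 < Y)
    (hG : ∀ y, Y ≤ y → ‖G ((s * y : ℝ) * Complex.I)‖ ≤ M / y) :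
    Integrable (fun l : ℝ => (⟪f, Ξ l f⟫_ℂ).re) ∧ ∫ l : ℝ, (⟪f, Ξ l f⟫_ℂ).re ≤ 2 * M := by
  set h : ℝ → ℝ := fun l => (⟪f, Ξ l f⟫_ℂ).re with hh
  have hhm : Measurable h := Complex.measurable_re.comp hmeas
  have hs0 : s ≠ 0 := by rintro rfl; norm_num at hs
  have hpos' : ∀ᵐ l ∂(volume : Measure ℝ), 0 ≤ h l ∧ (⟪f, Ξ l f⟫_ℂ).im = 0 := by
    filter_upwards [hpos] with l hl
    have := hl.inner_nonneg_right f
    rw [Complex.nonneg_iff] at this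
    exact ⟨this.1, this.2.symm⟩
  have hCim : (⟪f, C f⟫_ℂ).im = 0 := by
    rw [← Complex.conj_eq_iff_im, inner_conj_symm]
    conv_lhs => rw [← hC.adjoint_eq]
    rw [ContinuousLinearMap.adjoint_inner_left]
  have key : ∀ y, Y ≤ y → Integrable (fun l => y / (l ^ 2 + y ^ 2) * h l) ∧
      ∫ l, y / (l ^ 2 + y ^ 2) * h l ≤ M / y := by
    intro y hy
    have hy0 : 0 < y := hY.trans_le hy
    have him : (((s * y : ℝ) : ℂ) * Complex.I).im ≠ 0 := by simp [hs0, hy0.ne']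
    obtain ⟨hi, he⟩ := hrep _ him
    have hae : (fun l : ℝ => s * ((((l : ℂ) - (s * y : ℝ) * Complex.I)⁻¹ -
        (l : ℂ) * ((1 : ℂ) + (l : ℂ) ^ 2)⁻¹) * ⟪f, Ξ l f⟫_ℂ).im)
        =ᵐ[volume] fun l => y / (l ^ 2 + y ^ 2) * h l := by
      filter_upwards [hpos'] with l hl
      rw [Complex.mul_im, kernel_im s y l hs, hl.2, mul_zero, zero_add]
      change s * (s * _ * h l) = _
      linear_combination (y / (l ^ 2 + y ^ 2) * h l) * hs
    have hi' := (hi.im.const_mul s)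
    refine ⟨hi'.congr hae, ?_⟩
    rw [← integral_congr_ae hae, integral_const_mul]
    have h1 : ∫ l : ℝ, ((((l : ℂ) - (s * y : ℝ) * Complex.I)⁻¹ -
        (l : ℂ) * ((1 : ℂ) + (l : ℂ) ^ 2)⁻¹) * ⟪f, Ξ l f⟫_ℂ).im
        = (G ((s * y : ℝ) * Complex.I)).im := by
      rw [he, Complex.add_im, hCim, zero_add]
      exact integral_im hi
    rw [h1]
    have habs : |s| = 1 := by
      rw [← sq_eq_sq₀ (abs_nonneg _) zero_le_one, sq_abs, hs, one_pow]
    calc _ ≤ |s * (G ((s * y : ℝ) * Complex.I)).im| := le_abs_self _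
      _ = |(G ((s * y : ℝ) * Complex.I)).im| := by rw [abs_mul, habs, one_mul]
      _ ≤ _ := (Complex.abs_im_le_norm _).trans (hG y hy)
  have hle : ∀ y, Y ≤ y → ∀ l, 0 ≤ h l → l ∈ Set.Ioc (-y) y →
      h l ≤ 2 * y * (y / (l ^ 2 + y ^ 2) * h l) := by
    intro y hy l hl hm
    have hy0 : 0 < y := hY.trans_le hy
    have h1 : l ^ 2 ≤ y ^ 2 := sq_le_sq' hm.1.le hm.2
    have h2 : 1 ≤ 2 * y * (y / (l ^ 2 + y ^ 2)) := by
      rw [← mul_div_assoc, le_div_iff₀ (by positivity)]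
      nlinarith
    calc h l = 1 * h l := (one_mul _).symm
      _ ≤ (2 * y * (y / (l ^ 2 + y ^ 2))) * h l := by gcongr
      _ = _ := by ring
  have hion : ∀ y, Y ≤ y → IntegrableOn h (Set.Ioc (-y) y) := by
    intro y hy
    refine Integrable.mono' (((key y hy).1.const_mul (2 * y)).integrableOn)
      hhm.aestronglyMeasurable ?_
    rw [ae_restrict_iff' measurableSet_Ioc]
    filter_upwards [hpos'] with l hl hm
    rw [Real.norm_of_nonneg hl.1]
    exact hle y hy l hl.1 hm
  have hbound : ∀ y, Y ≤ y → ∫ l in (-y)..y, h l ≤ 2 * M := by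
    intro y hy
    have hy0 : 0 < y := hY.trans_le hy
    rw [intervalIntegral.integral_of_le (by linarith)]
    calc ∫ l in Set.Ioc (-y) y, h l
        ≤ ∫ l in Set.Ioc (-y) y, 2 * y * (y / (l ^ 2 + y ^ 2) * h l) := by
          refine integral_mono_ae (hion y hy) ((key y hy).1.const_mul (2 * y)).integrableOn ?_
          refine (ae_restrict_iff' measurableSet_Ioc).2 ?_
          filter_upwards [hpos'] with l hl hm
          exact hle y hy l hl.1 hm
      _ ≤ ∫ l, 2 * y * (y / (l ^ 2 + y ^ 2) * h l) := by
          refine setIntegral_le_integral ((key y hy).1.const_mul (2 * y)) ?_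
          filter_upwards [hpos'] with l hl
          have := hl.1
          change 0 ≤ _
          positivity
      _ = 2 * y * ∫ l, (y / (l ^ 2 + y ^ 2) * h l) := integral_const_mul _ _
      _ ≤ 2 * y * (M / y) := by gcongr; exact (key y hy).2
      _ = 2 * M := by field_simp
  have hb : Tendsto (fun n : ℕ => Y + (n : ℝ)) atTop atTop :=
    tendsto_atTop_add_const_left _ _ tendsto_natCast_atTop_atTop
  have ha : Tendsto (fun n : ℕ => -(Y + (n : ℝ))) atTop atBot := tendsto_neg_atTop_atBot.comp hb
  have hYn : ∀ n : ℕ, Y ≤ Y + (n : ℝ) := fun n => by simp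
  have hint : Integrable h := by
    refine integrable_of_intervalIntegral_norm_bounded (2 * M) (fun n => hion _ (hYn n)) ha hb
      (Eventually.of_forall fun n => ?_)
    refine le_trans (le_of_eq ?_) (hbound _ (hYn n))
    refine intervalIntegral.integral_congr_ae ?_
    filter_upwards [hpos'] with l hl _
    exact Real.norm_of_nonneg hl.1
  refine ⟨hint, le_of_tendsto (intervalIntegral_tendsto_integral hint ha hb)
    (Eventually.of_forall fun n => hbound _ (hYn n))⟩

lemma hilbertBasis_countable [SeparableSpace H] {ι : Type*} (b : HilbertBasis ι ℂ H) :
    Countable ι := by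
  refine Pairwise.countable_of_isOpen_disjoint (s := fun i => Metric.ball (b i) (1 / 2)) ?_
    (fun i => Metric.isOpen_ball) (fun i => ⟨b i, by simp⟩)
  intro i j hij
  refine Metric.ball_disjoint_ball ?_
  have h0 : ⟪b i, b j⟫_ℂ = 0 := b.orthonormal.2 hij
  have h1 := norm_sub_sq (𝕜 := ℂ) (b i) (b j)
  rw [h0, b.orthonormal.1, b.orthonormal.1] at h1
  simp at h1
  rw [dist_eq_norm]
  nlinarith [norm_nonneg (b i - b j)]

lemma hs_unitary (J K : H →L[ℂ] H) (hJ : IsSelfAdjoint J) (hJ2 : J * J = 1)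
    (hK : IsHilbertSchmidt K) (w : Set H) (b : HilbertBasis w ℂ H) :
    Summable fun i => ‖K (J (b i))‖ ^ 2 := by
  have hJJ : ∀ x, J (J x) = x := fun x => by
    change (J * J) x = x
    rw [hJ2]; rfl
  let U : H ≃ₗᵢ[ℂ] H := LinearIsometryEquiv.mk
    (LinearEquiv.ofInvolutive (J : H →ₗ[ℂ] H) hJJ) (by
      intro x
      change ‖J x‖ = ‖x‖
      rw [← sq_eq_sq₀ (norm_nonneg _) (norm_nonneg _)]
      have : ⟪J x, J x⟫_ℂ = ⟪x, x⟫_ℂ := by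
        rw [← ContinuousLinearMap.adjoint_inner_right, hJ.adjoint_eq, hJJ]
      rw [inner_self_eq_norm_sq_to_K, inner_self_eq_norm_sq_to_K] at this
      exact_mod_cast this)
  have := hK w (HilbertBasis.ofRepr (U.symm.trans b.repr))
  exact this

lemma core_s10 (Ξ : ℝ → H →L[ℂ] H) [SeparableSpace H] (C L : H →L[ℂ] H) (hC : IsSelfAdjoint C)
    (hL : IsHilbertSchmidt L)
    (hbd : ∀ᵐ l ∂(volume : Measure ℝ),
      (Ξ l).IsPositive ∧ ((1 : H →L[ℂ] H) - Ξ l).IsPositive ∧ IsTraceClass (Ξ l))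
    (G : ℂ → H →L[ℂ] H) (hmeas : ∀ f g : H, Measurable fun l : ℝ => ⟪f, Ξ l g⟫_ℂ)
    (hrep : ∀ z : ℂ, z.im ≠ 0 → ∀ f g : H,
      Integrable (fun l : ℝ =>
        (((l : ℂ) - z)⁻¹ - (l : ℂ) * ((1 : ℂ) + (l : ℂ) ^ 2)⁻¹) * ⟪f, Ξ l g⟫_ℂ) ∧
      ⟪f, G z g⟫_ℂ = ⟪f, C g⟫_ℂ +
        ∫ l : ℝ, (((l : ℂ) - z)⁻¹ - (l : ℂ) * ((1 : ℂ) + (l : ℂ) ^ 2)⁻¹) * ⟪f, Ξ l g⟫_ℂ)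
    (s : ℝ) (hs : s ^ 2 = 1) (Y M : ℝ) (hY : 0 < Y)
    (hG : ∀ y, Y ≤ y → ∀ f g : H,
      ‖⟪f, G ((s * y : ℝ) * Complex.I) g⟫_ℂ‖ ≤ M * (‖L f‖ * ‖L g‖) / y) :
    (Integrable (fun l : ℝ => (trH (Ξ l)).re) ∧
      (∀ᵐ l ∂(volume : Measure ℝ), 0 ≤ (trH (Ξ l)).re ∧ (trH (Ξ l)).im = 0)) ∧
    ∀ z : ℂ, z.im ≠ 0 → ∀ f g : H,
      Integrable (fun l : ℝ => ((l : ℂ) - z)⁻¹ * ⟪f, Ξ l g⟫_ℂ) ∧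
      ⟪f, G z g⟫_ℂ = ∫ l : ℝ, ((l : ℂ) - z)⁻¹ * ⟪f, Ξ l g⟫_ℂ := by
  have hpos : ∀ᵐ l ∂(volume : Measure ℝ), (Ξ l).IsPositive := hbd.mono fun l h => h.1
  have hdiag : ∀ f : H, Integrable (fun l : ℝ => (⟪f, Ξ l f⟫_ℂ).re) ∧
      ∫ l : ℝ, (⟪f, Ξ l f⟫_ℂ).re ≤ 2 * (M * (‖L f‖ * ‖L f‖)) := fun f =>
    core_diag Ξ C hC hpos f (fun z => ⟪f, G z f⟫_ℂ) (hmeas f f) (fun z hz => hrep z hz f f)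
      s hs Y _ hY (fun y hy => hG y hy f f)
  have hnn : ∀ f : H, ∀ᵐ l ∂(volume : Measure ℝ), 0 ≤ (⟪f, Ξ l f⟫_ℂ).re := fun f => by
    filter_upwards [hpos] with l hl
    exact (Complex.nonneg_iff.1 (hl.inner_nonneg_right f)).1
  have hdiagC : ∀ f : H, Integrable (fun l : ℝ => ⟪f, Ξ l f⟫_ℂ) := fun f => by
    refine (hdiag f).1.ofReal.congr ?_
    filter_upwards [hpos] with l hl
    have := (Complex.nonneg_iff.1 (hl.inner_nonneg_right f)).2
    exact Complex.ext (by simp) (by simpa using this)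
  have hF : ∀ f g : H, Integrable (fun l : ℝ => ⟪f, Ξ l g⟫_ℂ) := fun f g => by
    have e : ∀ l, ⟪f, Ξ l g⟫_ℂ = (1 / 4 : ℂ) * (⟪f + g, Ξ l (f + g)⟫_ℂ - ⟪f - g, Ξ l (f - g)⟫_ℂ
        + Complex.I * ⟪f + Complex.I • g, Ξ l (f + Complex.I • g)⟫_ℂ * (-1)
        + Complex.I * ⟪f - Complex.I • g, Ξ l (f - Complex.I • g)⟫_ℂ) := by
      intro l
      simp only [map_add, map_sub, map_smul, inner_add_left, inner_add_right, inner_sub_left,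
        inner_sub_right, inner_smul_left, inner_smul_right, Complex.conj_I]
      ring_nf
      simp only [Complex.I_sq]
      ring
    simp_rw [e]
    exact ((((hdiagC _).sub (hdiagC _)).add (((hdiagC _).const_mul _).mul_const _)).add
      ((hdiagC _).const_mul _)).const_mul _
  refine ⟨?_, ?_⟩
  · obtain ⟨w, b, htr'⟩ : ∃ (w : Set H) (b : HilbertBasis w ℂ H), ∀ T : H →L[ℂ] H,
        trH T = ∑' i, ⟪b i, T (b i)⟫_ℂ :=
      ⟨_, (exists_hilbertBasis ℂ H).choose_spec.choose, fun T => rfl⟩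
    have hcount : Countable w := hilbertBasis_countable b
    have htr : ∀ l, trH (Ξ l) = ∑' i, ⟪b i, Ξ l (b i)⟫_ℂ := fun l => htr' _
    have hall : ∀ᵐ l ∂(volume : Measure ℝ), (∀ i, 0 ≤ (⟪b i, Ξ l (b i)⟫_ℂ).re) ∧
        trH (Ξ l) = ((∑' i, ENNReal.ofReal (⟪b i, Ξ l (b i)⟫_ℂ).re).toReal : ℝ) := by
      filter_upwards [hbd] with l hl
      have h1 := fun i => hl.1.inner_nonneg_right (b i)
      have h2 : ∀ i, 0 ≤ (⟪b i, Ξ l (b i)⟫_ℂ).re := fun i => (Complex.nonneg_iff.1 (h1 i)).1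
      refine ⟨h2, ?_⟩
      have h3 : ∀ i, ⟪b i, Ξ l (b i)⟫_ℂ = ((⟪b i, Ξ l (b i)⟫_ℂ).re : ℂ) := fun i =>
        Complex.ext (by simp) (by simpa using (Complex.nonneg_iff.1 (h1 i)).2.symm)
      rw [htr, tsum_congr h3, ← Complex.ofReal_tsum, ENNReal.tsum_toReal_eq (by simp)]
      congr 1
      exact tsum_congr fun i => (ENNReal.toReal_ofReal (h2 i)).symm
    refine ⟨?_, ?_⟩
    · have hsum := hL w b
      have hm : ∀ i, Measurable fun l => ENNReal.ofReal (⟪b i, Ξ l (b i)⟫_ℂ).re := fun i =>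
        (Complex.measurable_re.comp (hmeas _ _)).ennreal_ofReal
      have hfin : ∫⁻ l, ∑' i, ENNReal.ofReal (⟪b i, Ξ l (b i)⟫_ℂ).re ≠ ⊤ := by
        rw [lintegral_tsum fun i => (hm i).aemeasurable]
        have hsum2 : Summable fun i => 2 * (M * (‖L (b i)‖ * ‖L (b i)‖)) := by
          simpa [← pow_two] using (hsum.mul_left M).mul_left 2
        refine ne_top_of_le_ne_top hsum2.tsum_ofReal_ne_top (ENNReal.tsum_le_tsum fun i => ?_)
        rw [← ofReal_integral_eq_lintegral_ofReal (hdiag _).1 (hnn _)]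
        exact ENNReal.ofReal_le_ofReal (hdiag _).2
      refine (integrable_toReal_of_lintegral_ne_top
        (Measurable.ennreal_tsum hm).aemeasurable hfin).congr ?_
      filter_upwards [hall] with l hl
      rw [hl.2, Complex.ofReal_re]
    · filter_upwards [hall] with l hl
      rw [hl.2]
      simp
  · have hkm : ∀ z : ℂ, z.im ≠ 0 → ∀ l : ℝ, ‖((l : ℂ) - z)⁻¹‖ ≤ |z.im|⁻¹ := by
      intro z hz l
      rw [norm_inv]
      have := Complex.abs_im_le_norm ((l : ℂ) - z)
      simp at this
      exact inv_anti₀ (abs_pos.2 hz) this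
    have hki : ∀ z : ℂ, z.im ≠ 0 → ∀ f g : H,
        Integrable (fun l : ℝ => ((l : ℂ) - z)⁻¹ * ⟪f, Ξ l g⟫_ℂ) := by
      intro z hz f g
      exact (hF f g).bdd_mul (c := |z.im|⁻¹) (by
        apply Measurable.aestronglyMeasurable; fun_prop) (Eventually.of_forall (hkm z hz))
    intro z hz f g
    refine ⟨hki z hz f g, ?_⟩
    set c : ℂ := ⟪f, C g⟫_ℂ - ∫ l : ℝ, (l : ℂ) * ((1 : ℂ) + (l : ℂ) ^ 2)⁻¹ * ⟪f, Ξ l g⟫_ℂ with hc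
    have hrep2 : ∀ z : ℂ, z.im ≠ 0 →
        ⟪f, G z g⟫_ℂ = c + ∫ l : ℝ, ((l : ℂ) - z)⁻¹ * ⟪f, Ξ l g⟫_ℂ := by
      intro z hz
      obtain ⟨hi, he⟩ := hrep z hz f g
      have h1 : Integrable (fun l : ℝ => (l : ℂ) * ((1 : ℂ) + (l : ℂ) ^ 2)⁻¹ * ⟪f, Ξ l g⟫_ℂ) := by
        refine ((hki z hz f g).sub hi).congr (Eventually.of_forall fun l => ?_)
        simp only [Pi.sub_apply]; ring
      rw [he, hc]
      simp_rw [sub_mul]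
      rw [integral_sub (hki z hz f g) h1]
      ring
    have hs0 : s ≠ 0 := by rintro rfl; norm_num at hs
    have habs : |s| = 1 := by
      rw [← sq_eq_sq₀ (abs_nonneg _) zero_le_one, sq_abs, hs, one_pow]
    set D : ℝ := M * (‖L f‖ * ‖L g‖) + ∫ l, ‖⟪f, Ξ l g⟫_ℂ‖ with hD
    have hcb : ∀ y, Y ≤ y → ‖c‖ ≤ D / y := by
      intro y hy
      have hy0 : 0 < y := hY.trans_le hy
      have himv : (((s * y : ℝ) : ℂ) * Complex.I).im = s * y := by simp
      have him : (((s * y : ℝ) : ℂ) * Complex.I).im ≠ 0 := by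
        rw [himv]; exact mul_ne_zero hs0 hy0.ne'
      have h1 := hrep2 _ him
      have h2 : ‖∫ l : ℝ, ((l : ℂ) - (s * y : ℝ) * Complex.I)⁻¹ * ⟪f, Ξ l g⟫_ℂ‖
          ≤ (∫ l, ‖⟪f, Ξ l g⟫_ℂ‖) / y := by
        rw [div_eq_inv_mul, ← integral_const_mul]
        refine norm_integral_le_of_norm_le ((hF f g).norm.const_mul _)
          (Eventually.of_forall fun l => ?_)
        rw [norm_mul]
        gcongr
        have := hkm _ him l
        rwa [himv, abs_mul, habs, one_mul, abs_of_pos hy0] at this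
      have h3 := hG y hy f g
      rw [eq_sub_of_add_eq h1.symm, hD, add_div]
      exact (norm_sub_le _ _).trans (add_le_add h3 h2)
    have hc0 : c = 0 := by
      rw [← norm_le_zero_iff]
      refine ge_of_tendsto (tendsto_const_nhds.div_atTop tendsto_id : Tendsto (fun y : ℝ => D / y)
        atTop (𝓝 0)) ?_
      filter_upwards [eventually_ge_atTop Y] with y hy using hcb y hy
    rw [hrep2 z hz, hc0, zero_add]

lemma Jplus_sa (J : H →L[ℂ] H) (hJ : IsSelfAdjoint J) : adjoint (Jplus J) = Jplus J := by
  have h1 : adjoint (1 : H →L[ℂ] H) = 1 := star_one _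
  have h2 : (starRingEnd ℂ) (2 : ℂ)⁻¹ = 2⁻¹ := by
    rw [map_inv₀, map_ofNat]
  rw [Jplus, LinearIsometryEquiv.map_smulₛₗ, map_add, h1, hJ.adjoint_eq, h2]

lemma Jminus_sa (J : H →L[ℂ] H) (hJ : IsSelfAdjoint J) : adjoint (Jminus J) = Jminus J := by
  have h1 : adjoint (1 : H →L[ℂ] H) = 1 := star_one _
  have h2 : (starRingEnd ℂ) (2 : ℂ)⁻¹ = 2⁻¹ := by
    rw [map_inv₀, map_ofNat]
  rw [Jminus, LinearIsometryEquiv.map_smulₛₗ, map_sub, h1, hJ.adjoint_eq, h2]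

lemma hs_plus (J K : H →L[ℂ] H) (hJ : IsSelfAdjoint J) (hJ2 : J * J = 1)
    (hK : IsHilbertSchmidt K) : IsHilbertSchmidt (K * Jplus J) := by
  intro w b
  refine Summable.of_nonneg_of_le (fun i => by positivity) (fun i => ?_)
    ((hK w b).add (hs_unitary J K hJ hJ2 hK w b))
  have e : (K * Jplus J) (b i) = (2 : ℂ)⁻¹ • (K (b i) + K (J (b i))) := by
    simp [Jplus]
  have h1 := norm_add_le (K (b i)) (K (J (b i)))
  rw [e, norm_smul, mul_pow]
  norm_num
  nlinarith [sq_nonneg (‖K (b i)‖ - ‖K (J (b i))‖), norm_nonneg (K (b i) + K (J (b i))),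
    norm_nonneg (K (b i)), norm_nonneg (K (J (b i)))]

lemma hs_minus (J K : H →L[ℂ] H) (hJ : IsSelfAdjoint J) (hJ2 : J * J = 1)
    (hK : IsHilbertSchmidt K) : IsHilbertSchmidt (K * Jminus J) := by
  have : Jminus J = Jplus (-J) := by simp [Jminus, Jplus, sub_eq_add_neg]
  rw [this]
  exact hs_plus _ _ hJ.neg (by simpa using hJ2) hK

lemma opLog_res (A : SelfAdjointOp H) (L : H →L[ℂ] H) (s e : ℝ) (hs : s ^ 2 = 1) (he : e ^ 2 = 1)
    (y : ℝ) (hy : 1 + 2 * ‖L‖ ^ 2 ≤ y) (f g : H) :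
    ‖⟪f, opLog (1 + adjoint L * ((e : ℂ) • A.resolvent ((s * y : ℝ) * Complex.I)) * L) g⟫_ℂ‖
      ≤ Real.pi * (‖L f‖ * ‖L g‖) / y := by
  have hy0 : 0 < y := by nlinarith [sq_nonneg ‖L‖]
  have hs0 : s ≠ 0 := by rintro rfl; norm_num at hs
  have habs : ∀ s : ℝ, s ^ 2 = 1 → |s| = 1 := fun s hs => by
    rw [← sq_eq_sq₀ (abs_nonneg _) zero_le_one, sq_abs, hs, one_pow]
  have himv : (((s * y : ℝ) : ℂ) * Complex.I).im = s * y := by simp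
  have him : (((s * y : ℝ) : ℂ) * Complex.I).im ≠ 0 := by
    rw [himv]; exact mul_ne_zero hs0 hy0.ne'
  have hR := resolvent_bound A him
  rw [himv, abs_mul, habs s hs, one_mul, abs_of_pos hy0] at hR
  have hB : ‖(e : ℂ) • A.resolvent ((s * y : ℝ) * Complex.I)‖ ≤ y⁻¹ := by
    rw [norm_smul, Complex.norm_real, Real.norm_eq_abs, habs e he, one_mul]; exact hR
  refine (opLog_bound L _ ?_ f g).trans ?_
  · calc _ ≤ ‖L‖ ^ 2 * y⁻¹ := by gcongr
      _ ≤ 1 / 2 := by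
        rw [← div_eq_mul_inv, div_le_div_iff₀ hy0 two_pos]; linarith
  · calc _ ≤ Real.pi * y⁻¹ * (‖L f‖ * ‖L g‖) := by gcongr
      _ = _ := by rw [div_eq_mul_inv]; ring

/-- Lemma 3.4: under Hypothesis 3.1 the exponential Herglotz representations of
`log Φ₊` and `log Φ̃₋` simplify: `ξ± = tr Ξ± ∈ L¹(ℝ)` is nonnegative and
`log Φ₊(z) = ∫ Ξ₊(λ)(λ-z)⁻¹ dλ`, `log Φ̃₋(z) = -∫ Ξ₋(λ)(λ-z)⁻¹ dλ` (weak sense),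
with no additive constant and no subtraction of `λ(1+λ²)⁻¹`. -/
theorem simplified_representation [SeparableSpace H]
    (H0 Hp : SelfAdjointOp H) (J K : H →L[ℂ] H)
    (hJ : IsSelfAdjoint J) (hJ2 : J * J = 1) (hK : IsHilbertSchmidt K)
    (hsump : IsSumOf Hp H0 (K * Jplus J * ContinuousLinearMap.adjoint K))
    (Ξp Ξm : ℝ → H →L[ℂ] H) (Cp Cm : H →L[ℂ] H)
    (hCp : IsSelfAdjoint Cp) (hCm : IsSelfAdjoint Cm)
    (hmeasp : ∀ f g : H, Measurable fun l : ℝ => ⟪f, Ξp l g⟫_ℂ)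
    (hmeasm : ∀ f g : H, Measurable fun l : ℝ => ⟪f, Ξm l g⟫_ℂ)
    (hbdp : ∀ᵐ l ∂(volume : Measure ℝ),
      (Ξp l).IsPositive ∧ ((1 : H →L[ℂ] H) - Ξp l).IsPositive ∧ IsTraceClass (Ξp l))
    (hbdm : ∀ᵐ l ∂(volume : Measure ℝ),
      (Ξm l).IsPositive ∧ ((1 : H →L[ℂ] H) - Ξm l).IsPositive ∧ IsTraceClass (Ξm l))
    (hrepp : ∀ z : ℂ, z.im ≠ 0 → ∀ f g : H,
      Integrable (fun l : ℝ =>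
        (((l : ℂ) - z)⁻¹ - (l : ℂ) * ((1 : ℂ) + (l : ℂ) ^ 2)⁻¹) * ⟪f, Ξp l g⟫_ℂ) ∧
      ⟪f, logHerg (PhiPlus H0 J K) z g⟫_ℂ = ⟪f, Cp g⟫_ℂ +
        ∫ l : ℝ, (((l : ℂ) - z)⁻¹ - (l : ℂ) * ((1 : ℂ) + (l : ℂ) ^ 2)⁻¹) * ⟪f, Ξp l g⟫_ℂ)
    (hrepm : ∀ z : ℂ, z.im ≠ 0 → ∀ f g : H,
      Integrable (fun l : ℝ =>
        (((l : ℂ) - z)⁻¹ - (l : ℂ) * ((1 : ℂ) + (l : ℂ) ^ 2)⁻¹) * ⟪f, Ξm l g⟫_ℂ) ∧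
      ⟪f, logAntiHerg (PhiMinusT Hp J K) z g⟫_ℂ = ⟪f, Cm g⟫_ℂ -
        ∫ l : ℝ, (((l : ℂ) - z)⁻¹ - (l : ℂ) * ((1 : ℂ) + (l : ℂ) ^ 2)⁻¹) * ⟪f, Ξm l g⟫_ℂ) :
    (Integrable (fun l : ℝ => (trH (Ξp l)).re) ∧
     Integrable (fun l : ℝ => (trH (Ξm l)).re) ∧
     (∀ᵐ l ∂(volume : Measure ℝ), 0 ≤ (trH (Ξp l)).re ∧ (trH (Ξp l)).im = 0 ∧
        0 ≤ (trH (Ξm l)).re ∧ (trH (Ξm l)).im = 0)) ∧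
    ∀ z : ℂ, z.im ≠ 0 → ∀ f g : H,
      Integrable (fun l : ℝ => ((l : ℂ) - z)⁻¹ * ⟪f, Ξp l g⟫_ℂ) ∧
      Integrable (fun l : ℝ => ((l : ℂ) - z)⁻¹ * ⟪f, Ξm l g⟫_ℂ) ∧
      ⟪f, logHerg (PhiPlus H0 J K) z g⟫_ℂ =
        ∫ l : ℝ, ((l : ℂ) - z)⁻¹ * ⟪f, Ξp l g⟫_ℂ ∧
      ⟪f, logAntiHerg (PhiMinusT Hp J K) z g⟫_ℂ =
        -∫ l : ℝ, ((l : ℂ) - z)⁻¹ * ⟪f, Ξm l g⟫_ℂ := by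
  have hplus := core_s10 Ξp Cp (K * Jplus J) hCp (hs_plus J K hJ hJ2 hK) hbdp
    (logHerg (PhiPlus H0 J K)) hmeasp hrepp 1 (by norm_num)
    (1 + 2 * ‖K * Jplus J‖ ^ 2) Real.pi (by positivity) (by
      intro y hy f g
      have hy0 : 0 < y := by nlinarith [sq_nonneg ‖K * Jplus J‖]
      have h := opLog_res H0 (K * Jplus J) 1 1 (by norm_num) (by norm_num) y hy f g
      have e : logHerg (PhiPlus H0 J K) ((1 * y : ℝ) * Complex.I) =
          opLog (1 + adjoint (K * Jplus J) *
            (((1 : ℝ) : ℂ) • H0.resolvent ((1 * y : ℝ) * Complex.I)) * (K * Jplus J)) := by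
        rw [logHerg, if_pos (by simpa using hy0), PhiPlus]
        have ha : adjoint (K * Jplus J) = Jplus J * adjoint K := by
          conv_rhs => rw [← Jplus_sa J hJ]
          exact ContinuousLinearMap.adjoint_comp _ _
        rw [ha, Complex.ofReal_one, one_smul]
        simp only [mul_assoc]
      rw [e]; exact h)
  have hminus := core_s10 Ξm (-Cm) (K * Jminus J) hCm.neg (hs_minus J K hJ hJ2 hK) hbdm
    (fun z => - logAntiHerg (PhiMinusT Hp J K) z) hmeasm (by
      intro z hz f g
      refine ⟨(hrepm z hz f g).1, ?_⟩
      rw [ContinuousLinearMap.neg_apply, inner_neg_right, (hrepm z hz f g).2,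
        ContinuousLinearMap.neg_apply, inner_neg_right]
      ring) (-1) (by norm_num)
    (1 + 2 * ‖K * Jminus J‖ ^ 2) Real.pi (by positivity) (by
      intro y hy f g
      have hy0 : 0 < y := by nlinarith [sq_nonneg ‖K * Jminus J‖]
      have h := opLog_res Hp (K * Jminus J) (-1) (-1) (by norm_num) (by norm_num) y hy f g
      have e : logAntiHerg (PhiMinusT Hp J K) ((-1 * y : ℝ) * Complex.I) =
          opLog (1 + adjoint (K * Jminus J) *
            (((-1 : ℝ) : ℂ) • Hp.resolvent ((-1 * y : ℝ) * Complex.I)) * (K * Jminus J)) := by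
        rw [logAntiHerg, if_neg (by simpa using hy0.le), PhiMinusT]
        have ha : adjoint (K * Jminus J) = Jminus J * adjoint K := by
          conv_rhs => rw [← Jminus_sa J hJ]
          exact ContinuousLinearMap.adjoint_comp _ _
        rw [ha, Complex.ofReal_neg, Complex.ofReal_one, neg_smul, one_smul, sub_eq_add_neg]
        simp only [mul_assoc, mul_neg, neg_mul]
      rw [ContinuousLinearMap.neg_apply, inner_neg_right, norm_neg, e]; exact h)
  refine ⟨⟨hplus.1.1, hminus.1.1, ?_⟩, ?_⟩
  · filter_upwards [hplus.1.2, hminus.1.2] with l h1 h2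
    exact ⟨h1.1, h1.2, h2.1, h2.2⟩
  · intro z hz f g
    refine ⟨(hplus.2 z hz f g).1, (hminus.2 z hz f g).1, (hplus.2 z hz f g).2, ?_⟩
    have := (hminus.2 z hz f g).2
    rw [ContinuousLinearMap.neg_apply, inner_neg_right] at this
    rw [← this, neg_neg]

end SpectralShift
end
end
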